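/- arXiv:1808.09305 — 3 statements merged into one kernel-verified Lean document; each statement's English description precedes it below -/
import Mathlib

section
/- Let N ≥ 2, m ∈ ℕ, and let φ be a C^m function with compact support on ℝ^{N−1}. Then for every multi-index α ∈ ℕ₀^N with 1 ≤ |α| ≤ m there exists a function ψ^α of class C^{m−|α|} with compact support on ℝ^{N−1} satisfying ∫_{ℝ^{N−1}} ψ^α(y') dy' = 0, such that for every x' , y' ∈ ℝ^{N−1} and every x_N > 0, the partial derivative ∂^α with respect to x = (x', x_N) of the function x ↦ x_N^{−(N−1)} φ((x' − y')/x_N) equals x_N^{−(|α|+N−1)} ψ^α((x' − y')/x_N). -/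
open MeasureTheory
open scoped ENNReal

/-- The partial derivative of `f : ℝ^k → ℝ` in the `i`-th coordinate direction. -/
noncomputable def partialDer {k : ℕ} (i : Fin k) (f : (Fin k → ℝ) → ℝ) :
    (Fin k → ℝ) → ℝ :=
  fun x => fderiv ℝ f x (Pi.single i 1)

/-- The iterated partial derivative `∂^α` associated to a multi-index `α : Fin k → ℕ`. -/
noncomputable def multiPartialDer {k : ℕ} (α : Fin k → ℕ) (f : (Fin k → ℝ) → ℝ) :
    (Fin k → ℝ) → ℝ :=
  (List.finRange k).foldr (fun i g => (partialDer i)^[α i] g) f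

/-!
Differentiating `x ↦ x_N ^ k * ψ ((x' - y') / x_N)` in the direction `(w, s)` gives a function of
the same shape, with `k` lowered by one and with `ψ` replaced by
`z ↦ k s ψ(z) + Dψ(z)(w - s z)`.
Integration by parts shows that this new profile has integral `(k + n) s ∫ ψ`, where `n = N - 1`.
Starting from `k = -n`, the first derivative therefore has a profile of integral zero, and each
further derivative multiplies this integral by a number.
-/

section IntegrationByParts

variable {E F : Type*} [NormedAddCommGroup E] [NormedSpace ℝ E]
  [NormedAddCommGroup F] [NormedSpace ℝ F] {ψ : E → F}

lemma hasCompactSupport_fderiv_apply (hc : HasCompactSupport ψ) (V : E → E) :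
    HasCompactSupport fun z => fderiv ℝ ψ z (V z) :=
  (hc.fderiv (𝕜 := ℝ)).mono fun z hz hψ' => hz (by simp [hψ'])

variable [MeasurableSpace E] [BorelSpace E] {μ : Measure E}

lemma integrable_fderiv_apply_of_hasCompactSupport [IsFiniteMeasureOnCompacts μ]
    (hψ : ContDiff ℝ 1 ψ) (hc : HasCompactSupport ψ) {V : E → E} (hV : Continuous V) :
    Integrable (fun z => fderiv ℝ ψ z (V z)) μ :=
  ((hψ.continuous_fderiv one_ne_zero).clm_apply hV).integrable_of_hasCompactSupport
    (hasCompactSupport_fderiv_apply hc V)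

variable [FiniteDimensional ℝ E] [μ.IsAddHaarMeasure]

lemma integral_smul_fderiv_apply_of_hasCompactSupport {f : E → ℝ} (hf : ContDiff ℝ 1 f)
    (hψ : ContDiff ℝ 1 ψ) (hc : HasCompactSupport ψ) (v : E) :
    ∫ z, f z • fderiv ℝ ψ z v ∂μ = -∫ z, fderiv ℝ f z v • ψ z ∂μ := by
  have hf' : Continuous fun z => fderiv ℝ f z v :=
    (hf.continuous_fderiv one_ne_zero).clm_apply continuous_const
  have hfψ' : Integrable (fun z => f z • fderiv ℝ ψ z v) μ := by
    simpa using integrable_fderiv_apply_of_hasCompactSupport hψ hc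
      (hf.continuous.smul (continuous_const (y := v)))
  exact integral_smul_fderiv_eq_neg_fderiv_smul_of_integrable
    ((hf'.smul hψ.continuous).integrable_of_hasCompactSupport hc.smul_left) hfψ'
    ((hf.continuous.smul hψ.continuous).integrable_of_hasCompactSupport hc.smul_left)
    (fun z _ => hf.differentiable one_ne_zero z) (fun z _ => hψ.differentiable one_ne_zero z)

lemma integral_fderiv_apply_of_hasCompactSupport (hψ : ContDiff ℝ 1 ψ)
    (hc : HasCompactSupport ψ) (v : E) : ∫ z, fderiv ℝ ψ z v ∂μ = 0 := by
  simpa using integral_smul_fderiv_apply_of_hasCompactSupport (μ := μ)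
    (contDiff_const (c := (1 : ℝ))) hψ hc v

lemma integral_fderiv_apply_self_of_hasCompactSupport (hψ : ContDiff ℝ 1 ψ)
    (hc : HasCompactSupport ψ) :
    ∫ z, fderiv ℝ ψ z z ∂μ = -(Module.finrank ℝ E : ℝ) • ∫ z, ψ z ∂μ := by
  let b := Module.finBasis ℝ E
  let coord i : E →L[ℝ] ℝ := (b.coord i).toContinuousLinearMap
  have coord_basis i : coord i (b i) = 1 := by simp [coord]
  have basis_expansion (z : E) : z = ∑ i, coord i z • b i := (b.sum_repr z).symm
  have fderiv_expansion (z : E) : fderiv ℝ ψ z z = ∑ i, fderiv ℝ ψ z (coord i z • b i) := by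
    rw [← map_sum, ← basis_expansion]
  have integral_coord i : ∫ z, fderiv ℝ ψ z (coord i z • b i) ∂μ = -∫ z, ψ z ∂μ := by
    simp only [map_smul]
    rw [integral_smul_fderiv_apply_of_hasCompactSupport (coord i).contDiff hψ hc]
    simp only [ContinuousLinearMap.fderiv, coord_basis, one_smul]
  have integrable_coord i : Integrable (fun z => fderiv ℝ ψ z (coord i z • b i)) μ :=
    integrable_fderiv_apply_of_hasCompactSupport hψ hc (by fun_prop)
  simp_rw [fderiv_expansion]
  rw [integral_finsetSum _ fun i _ => integrable_coord i]
  simp_rw [integral_coord]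
  simp [Nat.cast_smul_eq_nsmul]

end IntegrationByParts

section ProfileDeriv

variable {E F : Type*} [NormedAddCommGroup E] [NormedSpace ℝ E]
  [NormedAddCommGroup F] [NormedSpace ℝ F] {ψ : E → F}

/-- The profile of a directional derivative: the function `(u, t) ↦ t ^ k • ψ (t⁻¹ • u)` on `E × ℝ`
has derivative `t ^ (k - 1) • profileDeriv k w s ψ (t⁻¹ • u)` in the direction `(w, s)`, wherever
`t ≠ 0`. -/
noncomputable def profileDeriv (k : ℝ) (w : E) (s : ℝ) (ψ : E → F) : E → F :=
  fun z => (k * s) • ψ z + fderiv ℝ ψ z (w - s • z)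

lemma contDiff_profileDeriv {r : WithTop ℕ∞} (hψ : ContDiff ℝ (r + 1) ψ)
    (k : ℝ) (w : E) (s : ℝ) : ContDiff ℝ r (profileDeriv k w s ψ) :=
  ((hψ.of_le le_self_add).const_smul (k * s)).add
    ((hψ.fderiv_right le_rfl).clm_apply (contDiff_const.sub (contDiff_id.const_smul s)))

lemma hasCompactSupport_profileDeriv (hc : HasCompactSupport ψ) (k : ℝ) (w : E) (s : ℝ) :
    HasCompactSupport (profileDeriv k w s ψ) :=
  (hc.smul_left (f := fun _ => k * s)).add (hasCompactSupport_fderiv_apply hc _)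

lemma integral_profileDeriv [FiniteDimensional ℝ E] [MeasurableSpace E] [BorelSpace E]
    {μ : Measure E} [μ.IsAddHaarMeasure] (hψ : ContDiff ℝ 1 ψ)
    (hc : HasCompactSupport ψ) (k : ℝ) (w : E) (s : ℝ) :
    ∫ z, profileDeriv k w s ψ z ∂μ = ((k + Module.finrank ℝ E) * s) • ∫ z, ψ z ∂μ := by
  have integrable_zero_order : Integrable (fun z => (k * s) • ψ z) μ :=
    (hψ.continuous.const_smul _).integrable_of_hasCompactSupport hc.smul_left
  have integrable_const : Integrable (fun z => fderiv ℝ ψ z w) μ :=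
    integrable_fderiv_apply_of_hasCompactSupport hψ hc continuous_const
  have integrable_self : Integrable (fun z => s • fderiv ℝ ψ z z) μ :=
    (integrable_fderiv_apply_of_hasCompactSupport hψ hc continuous_id).smul s
  simp only [profileDeriv, map_sub, map_smul]
  rw [integral_add integrable_zero_order (integrable_const.sub' integrable_self),
    integral_sub integrable_const integrable_self, integral_smul, integral_smul,
    integral_fderiv_apply_of_hasCompactSupport hψ hc,
    integral_fderiv_apply_self_of_hasCompactSupport hψ hc]
  module

lemma fderiv_zpow_smul_comp_inv_smul_sub {X : Type*} [NormedAddCommGroup X] [NormedSpace ℝ X]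
    (p : X →L[ℝ] E) (τ : X →L[ℝ] ℝ) (k : ℤ) (y : E) {x : X} (hx : τ x ≠ 0)
    (hψ : DifferentiableAt ℝ ψ ((τ x)⁻¹ • (p x - y))) (v : X) :
    fderiv ℝ (fun x => τ x ^ k • ψ ((τ x)⁻¹ • (p x - y))) x v =
      τ x ^ (k - 1) • profileDeriv k (p v) (τ v) ψ ((τ x)⁻¹ • (p x - y)) := by
  have hpow : HasFDerivAt (fun x => τ x ^ k) ((k * τ x ^ (k - 1)) • τ) x :=
    (hasDerivAt_zpow k (τ x) (Or.inl hx)).comp_hasFDerivAt x τ.hasFDerivAt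
  have hinv : HasFDerivAt (fun x => (τ x)⁻¹) (-(τ x ^ 2)⁻¹ • τ) x :=
    (hasDerivAt_inv hx).comp_hasFDerivAt x τ.hasFDerivAt
  have harg := hinv.fun_smul (p.hasFDerivAt.sub_const y)
  have hcomp : HasFDerivAt (fun x => ψ ((τ x)⁻¹ • (p x - y))) _ x := hψ.hasFDerivAt.comp x harg
  have hprod := hpow.fun_smul hcomp
  rw [hprod.fderiv]
  simp only [profileDeriv, zpow_sub_one₀ hx, add_apply, smul_apply,
    ContinuousLinearMap.comp_apply, ContinuousLinearMap.smulRight_apply, smul_eq_mul, map_add,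
    map_sub, map_smul]
  module

end ProfileDeriv

section ScaledProfile

variable {n : ℕ}

/-- The function `x ↦ x_N ^ k ψ((x' - y) / x_N)` of `x = (x', x_N)`, with profile `ψ`. The
coordinate `x_N` is `x (Fin.last n)`, and `x'` is `Fin.init x`. -/
noncomputable def scaledProfile (k : ℤ) (ψ : (Fin n → ℝ) → ℝ) (y : Fin n → ℝ) :
    (Fin (n + 1) → ℝ) → ℝ :=
  fun x => x (Fin.last n) ^ k *
    ψ fun i => (x (Fin.castSucc i) - y i) / x (Fin.last n)

/-- The profile of `∂_{i₁} ⋯ ∂_{iₗ}` applied to the function `x_N ^ (-n) φ((x' - y) / x_N)`, for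
a list `[i₁, …, iₗ]` of coordinates; the last entry is differentiated first. -/
noncomputable def iteratedProfile (φ : (Fin n → ℝ) → ℝ) :
    List (Fin (n + 1)) → (Fin n → ℝ) → ℝ
  | [] => φ
  | i :: l => profileDeriv (-(l.length + n)) (Fin.init (Pi.single i 1 : Fin (n + 1) → ℝ))
      ((Pi.single i 1 : Fin (n + 1) → ℝ) (Fin.last n)) (iteratedProfile φ l)

variable {φ : (Fin n → ℝ) → ℝ}

lemma contDiff_iteratedProfile {r : WithTop ℕ∞} (l : List (Fin (n + 1)))
    (hφ : ContDiff ℝ (r + l.length) φ) : ContDiff ℝ r (iteratedProfile φ l) := by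
  induction l generalizing r with
  | nil => simpa [iteratedProfile] using hφ
  | cons i l ih =>
    have hφ' : ContDiff ℝ (r + 1 + l.length) φ := by
      simpa [add_assoc, add_comm (1 : WithTop ℕ∞)] using hφ
    exact contDiff_profileDeriv (ih hφ') _ _ _

lemma hasCompactSupport_iteratedProfile (hc : HasCompactSupport φ) (l : List (Fin (n + 1))) :
    HasCompactSupport (iteratedProfile φ l) := by
  induction l with
  | nil => exact hc
  | cons i l ih => exact hasCompactSupport_profileDeriv ih _ _ _

lemma integral_iteratedProfile {l : List (Fin (n + 1))} (hl : l ≠ [])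
    (hφ : ContDiff ℝ l.length φ) (hc : HasCompactSupport φ) :
    ∫ z, iteratedProfile φ l z = 0 := by
  induction l with
  | nil => exact absurd rfl hl
  | cons i l ih =>
    have hl_diff : ContDiff ℝ 1 (iteratedProfile φ l) :=
      contDiff_iteratedProfile l (by simpa [add_comm] using hφ)
    rw [iteratedProfile, integral_profileDeriv hl_diff (hasCompactSupport_iteratedProfile hc l),
      Module.finrank_fin_fun]
    rcases eq_or_ne l [] with rfl | hl'
    · simp
    · rw [ih hl' (hφ.of_le (by simp)), smul_zero]

lemma partialDer_scaledProfile {ψ : (Fin n → ℝ) → ℝ} (hψ : Differentiable ℝ ψ) (k : ℤ)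
    (y : Fin n → ℝ) (i : Fin (n + 1)) {x : Fin (n + 1) → ℝ} (hx : x (Fin.last n) ≠ 0) :
    partialDer i (scaledProfile k ψ y) x =
      scaledProfile (k - 1) (profileDeriv k (Fin.init (Pi.single i 1 : Fin (n + 1) → ℝ))
        ((Pi.single i 1 : Fin (n + 1) → ℝ) (Fin.last n)) ψ) y x := by
  let p : (Fin (n + 1) → ℝ) →L[ℝ] (Fin n → ℝ) :=
    ContinuousLinearMap.pi fun j => ContinuousLinearMap.proj (Fin.castSucc j)
  let τ : (Fin (n + 1) → ℝ) →L[ℝ] ℝ := ContinuousLinearMap.proj (Fin.last n)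
  have scaledProfile_eq (k : ℤ) (ψ : (Fin n → ℝ) → ℝ) :
      scaledProfile k ψ y = fun x => τ x ^ k • ψ ((τ x)⁻¹ • (p x - y)) := by
    funext x
    simp only [scaledProfile, div_eq_inv_mul]
    rfl
  rw [scaledProfile_eq, scaledProfile_eq]
  exact fderiv_zpow_smul_comp_inv_smul_sub p τ k y hx (hψ _) (Pi.single i 1)

lemma foldr_partialDer_scaledProfile (l : List (Fin (n + 1))) (hφ : ContDiff ℝ l.length φ)
    (y : Fin n → ℝ) {x : Fin (n + 1) → ℝ} (hx : x (Fin.last n) ≠ 0) :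
    l.foldr partialDer (scaledProfile (-n) φ y) x =
      scaledProfile (-(l.length + n)) (iteratedProfile φ l) y x := by
  induction l generalizing x with
  | nil => simp [iteratedProfile]
  | cons i l ih =>
    have hl_diff : ContDiff ℝ 1 (iteratedProfile φ l) :=
      contDiff_iteratedProfile l (by simpa [add_comm] using hφ)
    have eventually_eq : l.foldr partialDer (scaledProfile (-n) φ y) =ᶠ[nhds x]
        scaledProfile (-(l.length + n)) (iteratedProfile φ l) y := by
      filter_upwards [(continuous_apply (Fin.last n)).continuousAt.eventually_ne hx] with x' hx'
      exact ih (hφ.of_le (by simp)) hx'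
    calc (i :: l).foldr partialDer (scaledProfile (-n) φ y) x
        = partialDer i (scaledProfile (-(l.length + n)) (iteratedProfile φ l) y) x := by
          rw [List.foldr_cons, partialDer, partialDer, eventually_eq.fderiv_eq]
      _ = scaledProfile (-(l.length + n) - 1) (iteratedProfile φ (i :: l)) y x := by
          rw [partialDer_scaledProfile (hl_diff.differentiable one_ne_zero) _ _ _ hx,
            iteratedProfile]
          push_cast
          rfl
      _ = scaledProfile (-((i :: l).length + n)) (iteratedProfile φ (i :: l)) y x := by
          congr 1
          push_cast [List.length_cons]
          ring

end ScaledProfile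

section MultiIndex

variable {k : ℕ}

/-- The list of coordinates in which every `i` is repeated `α i` times, in increasing order, so that
`∂^α` is the composition of the partial derivatives along this list. -/
def multiIndexList (α : Fin k → ℕ) : List (Fin k) :=
  (List.finRange k).flatMap fun i => List.replicate (α i) i

lemma length_multiIndexList (α : Fin k → ℕ) : (multiIndexList α).length = ∑ i, α i := by
  simp [multiIndexList, List.length_flatMap, ← List.ofFn_eq_map, List.sum_ofFn]

lemma multiPartialDer_eq_foldr (α : Fin k → ℕ) (f : (Fin k → ℝ) → ℝ) :
    multiPartialDer α f = (multiIndexList α).foldr partialDer f := by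
  have foldr_replicate (i : Fin k) (a : ℕ) (g : (Fin k → ℝ) → ℝ) :
      (List.replicate a i).foldr partialDer g = (partialDer i)^[a] g := by
    induction a with
    | zero => rfl
    | succ a ih => rw [List.replicate_succ, List.foldr_cons, ih, Function.iterate_succ_apply']
  simp only [multiPartialDer, multiIndexList, List.foldr_flatMap, foldr_replicate]

end MultiIndex

theorem statement1_general (n : ℕ) (m : WithTop ℕ∞)
    (φ : (Fin n → ℝ) → ℝ) (hφ : ContDiff ℝ m φ) (hφc : HasCompactSupport φ)
    (α : Fin (n + 1) → ℕ) (hα1 : 1 ≤ ∑ i, α i) (hαm : (∑ i, α i : ℕ) ≤ m) :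
    ∃ ψ : (Fin n → ℝ) → ℝ,
      ContDiff ℝ (m - (∑ i, α i : ℕ)) ψ ∧
      HasCompactSupport ψ ∧
      (∫ y, ψ y) = 0 ∧
      ∀ (y' x' : Fin n → ℝ) (t : ℝ), t ≠ 0 →
        multiPartialDer α
            (fun x => (x (Fin.last n)) ^ (-(n : ℤ)) *
              φ (fun i => (x (Fin.castSucc i) - y' i) / x (Fin.last n)))
            (Fin.snoc x' t)
          = t ^ (-((∑ i, α i : ℤ) + n)) * ψ (fun i => (x' i - y' i) / t) := by
  have hlen := length_multiIndexList α
  have hφ_len : ContDiff ℝ (multiIndexList α).length φ := hφ.of_le (by rwa [hlen])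
  have hne : multiIndexList α ≠ [] := List.ne_nil_of_length_pos (by omega)
  refine ⟨iteratedProfile φ (multiIndexList α), ?_, hasCompactSupport_iteratedProfile hφc _,
    integral_iteratedProfile hne hφ_len hφc, fun y' x' t ht => ?_⟩
  · apply contDiff_iteratedProfile
    rwa [hlen, tsub_add_cancel_of_le hαm]
  · change multiPartialDer α (scaledProfile (-n) φ y') (Fin.snoc x' t) = _
    rw [multiPartialDer_eq_foldr,
      foldr_partialDer_scaledProfile (multiIndexList α) hφ_len y' (by simpa using ht), hlen]
    simp [scaledProfile]

/-- Let `N ≥ 2`, `m ∈ ℕ`, and let `φ` be a `C^m` function with compact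
support on `ℝ^{N-1}`.  For every multi-index `α ∈ ℕ₀^N` with `1 ≤ |α| ≤ m` there is a
function `ψ^α` of class `C^{m-|α|}` with compact support on `ℝ^{N-1}` with
`∫ ψ^α = 0`, such that for all `x', y' ∈ ℝ^{N-1}` and all `x_N > 0`,
`∂^α (x ↦ x_N^{-(N-1)} φ((x'-y')/x_N)) = x_N^{-(|α|+N-1)} ψ^α((x'-y')/x_N)`.
Here we write `N = n + 1` with `n ≥ 1`. -/
theorem statement1 (n : ℕ) (hn : 1 ≤ n) (m : ℕ) (hm : 1 ≤ m)
    (φ : (Fin n → ℝ) → ℝ) (hφ : ContDiff ℝ m φ) (hφc : HasCompactSupport φ)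
    (α : Fin (n + 1) → ℕ) (hα1 : 1 ≤ ∑ i, α i) (hαm : ∑ i, α i ≤ m) :
    ∃ ψ : (Fin n → ℝ) → ℝ,
      ContDiff ℝ (m - ∑ i, α i) ψ ∧
      HasCompactSupport ψ ∧
      (∫ y, ψ y) = 0 ∧
      ∀ (y' x' : Fin n → ℝ) (t : ℝ), 0 < t →
        multiPartialDer α
            (fun x => (x (Fin.last n)) ^ (-(n : ℤ)) *
              φ (fun i => (x (Fin.castSucc i) - y' i) / x (Fin.last n)))
            (Fin.snoc x' t)
          = t ^ (-((∑ i, α i : ℤ) + n)) * ψ (fun i => (x' i - y' i) / t) := by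
  obtain ⟨ψ, hψ, hψc, hint, hder⟩ :=
    statement1_general n m φ hφ hφc α hα1 (by exact_mod_cast hαm)
  exact ⟨ψ, hψ, hψc, hint, fun y' x' t ht => hder y' x' t ht.ne'⟩
end

section
/- Let U ⊆ ℝ^N be open, 1 ≤ p < ∞, 0 < s < 1, and let σ : U → (0,∞] be a screening function. Then the screened space W̃^{s,p}_{(σ)}(U) is sequentially complete with respect to its seminorm: if {f_n}_{n∈ℕ} ⊆ W̃^{s,p}_{(σ)}(U) satisfies |f_n − f_m|_{W̃^{s,p}_{(σ)}(U)} → 0 as n, m → ∞, then there exists f ∈ W̃^{s,p}_{(σ)}(U) such that |f_n − f|_{W̃^{s,p}_{(σ)}(U)} → 0 as n → ∞. -/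
open MeasureTheory Metric Filter
open scoped ENNReal

/-- The screened homogeneous fractional Sobolev seminorm
`|f|_{W̃^{s,p}_{(σ)}(U)} = (∫_U ∫_{B(x,σ(x)) ∩ U} |f(y)-f(x)|^p / |y-x|^{sp+N} dy dx)^{1/p}`
of a function `f : ℝ^N → ℝ`, valued in `ℝ≥0∞`. -/
noncomputable def screenedSeminorm (N : ℕ) (s p : ℝ)
    (U : Set (EuclideanSpace ℝ (Fin N))) (σ : EuclideanSpace ℝ (Fin N) → ℝ≥0∞)
    (f : EuclideanSpace ℝ (Fin N) → ℝ) : ℝ≥0∞ :=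
  (∫⁻ x in U, ∫⁻ y in U ∩ {y | edist y x < σ x},
      ENNReal.ofReal (|f y - f x| ^ p / dist y x ^ (s * p + N))) ^ (1 / p)

/-!
The seminorm is the `Lᵖ` norm of the increments `f y - f x` for a measure on the set `D` of pairs
with `y ∈ B(x, σ(x))`. A Cauchy sequence need not converge in `L¹_loc`, because the seminorm does
not see functions which are constant along chains of steps in `D`. So one chooses a small
neighbourhood in every chain class and subtracts from each function its average over that
neighbourhood. Near a point of `D` the measure dominates a multiple of the product measure, hence
the mean oscillation between the two ends of a step is controlled by the seminorm, and a Poincaré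
inequality propagates from the chosen neighbourhood to a neighbourhood of every point of its class.
Thus the normalized terms of a fast subsequence converge in `L¹_loc` and almost everywhere. The
normalization does not change increments over `D`, so the increments of the subsequence converge
almost everywhere to those of the limit, and Fatou's lemma gives convergence in the seminorm.
-/

open scoped Topology

section LpSpaces

variable {α E : Type*} {m : MeasurableSpace α} [NormedAddCommGroup E] {p : ℝ≥0∞}

lemma exists_lintegral_enorm_le_mul_eLpNorm {ρ ν : Measure α} [IsFiniteMeasure ρ] {c : ℝ≥0∞}
    (hc : c ≠ ∞) (hρν : ρ ≤ c • ν) (hp : 1 ≤ p) :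
    ∃ C ≠ ∞, ∀ g : α → E, AEStronglyMeasurable g ν → ∫⁻ x, ‖g x‖ₑ ∂ρ ≤ C * eLpNorm g p ν := by
  have hexp : 0 ≤ 1 / (1 : ℝ≥0∞).toReal - 1 / p.toReal := by
    rcases eq_or_ne p ∞ with rfl | hp_top
    · simp
    · have : 1 ≤ p.toReal := (ENNReal.toReal_mono hp_top hp).trans' (by simp)
      simpa using inv_le_one_of_one_le₀ this
  refine ⟨c ^ (1 / p).toReal * ρ .univ ^ (1 / (1 : ℝ≥0∞).toReal - 1 / p.toReal),
    ENNReal.mul_ne_top (ENNReal.rpow_ne_top_of_nonneg ENNReal.toReal_nonneg hc)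
      (ENNReal.rpow_ne_top_of_nonneg hexp (measure_ne_top ρ _)), fun g hg => ?_⟩
  have hg' : AEStronglyMeasurable g ρ :=
    hg.mono_ac (hρν.absolutelyContinuous.trans Measure.smul_absolutelyContinuous)
  calc ∫⁻ x, ‖g x‖ₑ ∂ρ = eLpNorm g 1 ρ := eLpNorm_one_eq_lintegral_enorm.symm
    _ ≤ eLpNorm g p ρ * ρ .univ ^ (1 / (1 : ℝ≥0∞).toReal - 1 / p.toReal) :=
      eLpNorm_le_eLpNorm_mul_rpow_measure_univ hp hg'
    _ ≤ c ^ (1 / p).toReal • eLpNorm g p ν * ρ .univ ^ (1 / (1 : ℝ≥0∞).toReal - 1 / p.toReal) := by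
      gcongr
      exact eLpNorm_le_of_measure_le_smul hρν
    _ = _ := by rw [smul_eq_mul]; ring

lemma tendsto_eLpNorm_sub_of_cauchy_of_ae_tendsto {ν : Measure α} {f : ℕ → α → E} {g : α → E}
    (hf : ∀ n, AEStronglyMeasurable (f n) ν)
    (hcauchy : ∀ ε > 0, ∃ M, ∀ n ≥ M, ∀ m ≥ M, eLpNorm (f n - f m) p ν < ε)
    {φ : ℕ → ℕ} (hφ : Tendsto φ atTop atTop)
    (hlim : ∀ᵐ x ∂ν, Tendsto (fun k => f (φ k) x) atTop (𝓝 (g x))) :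
    Tendsto (fun n => eLpNorm (f n - g) p ν) atTop (𝓝 0) := by
  rw [ENNReal.tendsto_nhds_zero]
  intro ε hε
  obtain ⟨M, hM⟩ := hcauchy ε hε
  filter_upwards [eventually_ge_atTop M] with n hn
  refine Lp.eLpNorm_le_of_ae_tendsto (f := fun k => f n - f (φ k)) (u := atTop) ?_
    (fun k => (hf n).sub (hf (φ k))) ?_
  · filter_upwards [hφ.eventually_ge_atTop M] with k hk using (hM n hn _ hk).le
  · filter_upwards [hlim] with x hx using tendsto_const_nhds.sub hx

lemma enorm_sub_average_le [NormedSpace ℝ E] [CompleteSpace E] {μ : Measure α} [IsFiniteMeasure μ]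
    [NeZero μ] {f : α → E} (hf : Integrable f μ) (c : E) :
    ‖c - ⨍ x, f x ∂μ‖ₑ ≤ ⨍⁻ x, ‖c - f x‖ₑ ∂μ := by
  have hsub : c - ⨍ x, f x ∂μ = ⨍ x, (c - f x) ∂μ := by
    simp only [average, integral_sub (integrable_const c) hf.to_average, integral_const,
      probReal_univ, one_smul]
  rw [hsub]
  exact enorm_integral_le_lintegral_enorm _

lemma measure_univ_mul_lintegral_enorm_sub_const_le (ρ : Measure α) {ρ' : Measure α}
    [IsFiniteMeasure ρ'] {h : α → E} (hh : AEStronglyMeasurable h ρ) (c : E) :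
    ρ .univ * ∫⁻ y, ‖h y - c‖ₑ ∂ρ' ≤
      ∫⁻ x, ∫⁻ y, ‖h y - h x‖ₑ ∂ρ' ∂ρ + ρ' .univ * ∫⁻ x, ‖h x - c‖ₑ ∂ρ := by
  have hc : AEMeasurable (fun x => ‖h x - c‖ₑ) ρ := (hh.sub aestronglyMeasurable_const).enorm
  calc ρ .univ * ∫⁻ y, ‖h y - c‖ₑ ∂ρ' = ∫⁻ _, ∫⁻ y, ‖h y - c‖ₑ ∂ρ' ∂ρ := by
        rw [lintegral_const, mul_comm]
    _ ≤ ∫⁻ x, ∫⁻ y, (‖h y - h x‖ₑ + ‖h x - c‖ₑ) ∂ρ' ∂ρ := by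
        gcongr with x y
        simpa only [sub_add_sub_cancel] using enorm_add_le (h y - h x) (h x - c)
    _ = ∫⁻ x, (∫⁻ y, ‖h y - h x‖ₑ ∂ρ' + ρ' .univ * ‖h x - c‖ₑ) ∂ρ := by
        simp only [lintegral_add_right _ measurable_const, lintegral_const, mul_comm]
    _ = _ := by
        rw [lintegral_add_right' _ (hc.const_mul _),
          lintegral_const_mul' _ _ (measure_ne_top ρ' _)]

lemma setLIntegral_prod_eq_lintegral_slice {β : Type*} {mβ : MeasurableSpace β} {μ : Measure α}
    {ν : Measure β} [SFinite ν] {s : Set (α × β)} (hs : MeasurableSet s) {f : α × β → ℝ≥0∞}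
    (hf : AEMeasurable f (μ.prod ν)) :
    ∫⁻ z in s, f z ∂μ.prod ν = ∫⁻ x, ∫⁻ y in Prod.mk x ⁻¹' s, f (x, y) ∂ν ∂μ := by
  rw [← lintegral_indicator hs, lintegral_prod _ (hf.indicator hs)]
  refine lintegral_congr fun x => ?_
  rw [← lintegral_indicator (measurable_prodMk_left hs)]
  rfl

lemma restrict_le_smul_withDensity {ρ : Measure α} {V D : Set α} (hV : MeasurableSet V)
    (hVD : V ⊆ D) {w : α → ℝ≥0∞} {c : ℝ≥0∞} (hc₀ : c ≠ 0) (hc : c ≠ ∞) (hw : ∀ x ∈ V, c ≤ w x) :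
    ρ.restrict V ≤ c⁻¹ • (ρ.restrict D).withDensity w :=
  calc ρ.restrict V = c⁻¹ • (ρ.restrict V).withDensity fun _ => c := by
        rw [withDensity_const, smul_smul, ENNReal.inv_mul_cancel hc₀ hc, one_smul]
    _ ≤ c⁻¹ • (ρ.restrict V).withDensity w := by
        gcongr
        exact withDensity_mono (ae_restrict_of_forall_mem hV hw)
    _ ≤ c⁻¹ • (ρ.restrict D).withDensity w := by
        gcongr
        rw [← Set.inter_eq_self_of_subset_left hVD, ← Measure.restrict_restrict hV,
          ← restrict_withDensity hV]
        exact Measure.restrict_le_self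

end LpSpaces

section LocallyIntegrable

variable {X E : Type*} [TopologicalSpace X] {mX : MeasurableSpace X} {μ : Measure X}

lemma ae_of_forall_exists_nhds_ae_restrict [SecondCountableTopology X] [OpensMeasurableSpace X]
    {P : X → Prop} (h : ∀ x, ∃ V ∈ 𝓝 x, ∀ᵐ y ∂μ.restrict V, P y) : ∀ᵐ y ∂μ, P y := by
  refine measure_null_of_locally_null _ fun x _ => ?_
  obtain ⟨V, hV, hP⟩ := h x
  obtain ⟨W, hWV, hW, hxW⟩ := mem_nhds_iff.1 hV
  refine ⟨_, inter_mem_nhdsWithin _ (hW.mem_nhds hxW), ?_⟩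
  rw [← Measure.restrict_apply' hW.measurableSet]
  exact ae_iff.1 (ae_restrict_of_ae_restrict_of_subset hWV hP)

lemma exists_locallyIntegrable_ae_tendsto [SecondCountableTopology X] [OpensMeasurableSpace X]
    [WeaklyLocallyCompactSpace X] [NormedAddCommGroup E] [CompleteSpace E] {u : ℕ → X → E}
    (hu : ∀ n, LocallyIntegrable (u n) μ)
    (hcauchy : ∀ x, ∃ V ∈ 𝓝 x, ∃ B : ℕ → ℝ≥0∞, ∑' N, B N ≠ ∞ ∧
      ∀ N n m, N ≤ n → N ≤ m → eLpNorm (u n - u m) 1 (μ.restrict V) < B N) :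
    ∃ g, LocallyIntegrable g μ ∧ ∀ᵐ x ∂μ, Tendsto (fun n => u n x) atTop (𝓝 (g x)) := by
  have hmeas n : AEStronglyMeasurable (u n) μ := (hu n).aestronglyMeasurable
  obtain ⟨g, hg, hlim⟩ := exists_stronglyMeasurable_limit_of_tendsto_ae hmeas <|
    ae_of_forall_exists_nhds_ae_restrict fun x => by
      obtain ⟨V, hV, B, hB, hcau⟩ := hcauchy x
      exact ⟨V, hV, Lp.ae_tendsto_of_cauchy_eLpNorm (fun n => (hmeas n).restrict) le_rfl hB hcau⟩
  refine ⟨g, fun x => ?_, hlim⟩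
  obtain ⟨V, hV, B, hB, hcau⟩ := hcauchy x
  obtain ⟨K, hK, hxK⟩ := exists_compact_mem_nhds x
  have hcau' N n m (hn : N ≤ n) (hm : N ≤ m) :
      eLpNorm (u n - u m) 1 (μ.restrict (V ∩ K)) < B N :=
    (eLpNorm_mono_measure _ (Measure.restrict_mono Set.inter_subset_left le_rfl)).trans_lt
      (hcau N n m hn hm)
  have hint n : MemLp (u n) 1 (μ.restrict (V ∩ K)) :=
    memLp_one_iff_integrable.2 <|
      ((hu n).integrableOn_isCompact hK).mono_set Set.inter_subset_right
  exact ⟨V ∩ K, inter_mem hV hxK, memLp_one_iff_integrable.1 <|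
    Lp.memLp_of_cauchy_tendsto le_rfl hint g hg.aestronglyMeasurable <|
      Lp.cauchy_tendsto_of_tendsto (fun n => (hint n).1) g hB hcau' (ae_restrict_of_ae hlim)⟩

end LocallyIntegrable

/-- The increment `f y - f x` of `f` as a function of the pair `(x, y)`. -/
def increment {X F : Type*} [Sub F] (f : X → F) (z : X × X) : F := f z.2 - f z.1

/-- `ν` is a measure on the pairs in a neighbourhood `D` of the diagonal which near each point of
`D` is comparable from below with `μ.prod μ`. The `Lᵖ(ν)` norms of increments then behave like
fractional Sobolev seminorms truncated to `D`. -/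
structure IsIncrementMeasure {X : Type*} [TopologicalSpace X] [MeasurableSpace X] (μ : Measure X)
    (ν : Measure (X × X)) (D : Set (X × X)) : Prop where
  isOpen : IsOpen D
  diag_mem (x : X) : (x, x) ∈ D
  absolutelyContinuous : ν ≪ μ.prod μ
  ae_mem : ∀ᵐ z ∂ν, z ∈ D
  exists_restrict_le : ∀ z ∈ D, ∃ V ∈ 𝓝 z, ∃ c ≠ ∞, (μ.prod μ).restrict V ≤ c • ν

/-- The mean oscillation of functions between `A` and `B` is controlled by the `Lᵖ(ν)` norm of
their increments. -/
def HasOscillationBound {X : Type*} [MeasurableSpace X] (F : Type*) [NormedAddCommGroup F]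
    (μ : Measure X) (ν : Measure (X × X)) (p : ℝ≥0∞) (A B : Set X) : Prop :=
  ∃ C ≠ ∞, ∀ h : X → F, AEStronglyMeasurable h μ →
    ∫⁻ x in A, ∫⁻ y in B, ‖h y - h x‖ₑ ∂μ ∂μ ≤ C * eLpNorm (increment h) p ν

/-- A Poincaré inequality: the distance in `L¹(B)` from a function to its average over `A` is
controlled by the `Lᵖ(ν)` norm of its increments. -/
def HasPoincareInequality {X : Type*} [TopologicalSpace X] [MeasurableSpace X] (F : Type*)
    [NormedAddCommGroup F] [NormedSpace ℝ F] (μ : Measure X) (ν : Measure (X × X)) (p : ℝ≥0∞)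
    (A B : Set X) : Prop :=
  ∃ C ≠ ∞, ∀ h : X → F, LocallyIntegrable h μ →
    ∫⁻ y in B, ‖h y - ⨍ x in A, h x ∂μ‖ₑ ∂μ ≤ C * eLpNorm (increment h) p ν

section Increment

variable {X F : Type*} {mX : MeasurableSpace X} [NormedAddCommGroup F] {μ : Measure X}
  {ν : Measure (X × X)} {p : ℝ≥0∞} {A A' B B' : Set X}

lemma increment_sub (f g : X → F) : increment (f - g) = increment f - increment g := by
  ext z
  simp only [increment, Pi.sub_apply]
  abel

lemma aestronglyMeasurable_increment [SFinite μ] {f : X → F} (hf : AEStronglyMeasurable f μ)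
    (hν : ν ≪ μ.prod μ) : AEStronglyMeasurable (increment f) ν :=
  (hf.comp_snd.sub hf.comp_fst).mono_ac hν

lemma eLpNorm_increment_lt_top_of_tendsto [SFinite μ] (hp : 1 ≤ p) (hν : ν ≪ μ.prod μ)
    {f : ℕ → X → F} {g : X → F} (hf : ∀ n, AEStronglyMeasurable (f n) μ)
    (hg : AEStronglyMeasurable g μ) (hf_top : ∀ n, eLpNorm (increment (f n)) p ν < ∞)
    (hlim : Tendsto (fun n => eLpNorm (increment (f n - g)) p ν) atTop (𝓝 0)) :
    eLpNorm (increment g) p ν < ∞ := by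
  simp only [increment_sub] at hlim
  exact (Lp.memLp_of_cauchy_tendsto hp
    (fun n => ⟨aestronglyMeasurable_increment (hf n) hν, hf_top n⟩) _
    (aestronglyMeasurable_increment hg hν) hlim).2

lemma HasOscillationBound.mono (h : HasOscillationBound F μ ν p A B) (hA : A' ⊆ A) (hB : B' ⊆ B) :
    HasOscillationBound F μ ν p A' B' := by
  obtain ⟨C, hC, hle⟩ := h
  refine ⟨C, hC, fun f hf => (hle f hf).trans' ?_⟩
  gcongr

lemma HasOscillationBound.symm [SFinite μ] (h : HasOscillationBound F μ ν p A B) :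
    HasOscillationBound F μ ν p B A := by
  obtain ⟨C, hC, hle⟩ := h
  refine ⟨C, hC, fun f hf => (hle f hf).trans_eq' ?_⟩
  have hmeas : AEMeasurable (Function.uncurry fun x y => ‖f y - f x‖ₑ)
      ((μ.restrict B).prod (μ.restrict A)) :=
    (hf.restrict.comp_snd.sub hf.restrict.comp_fst).enorm
  rw [lintegral_lintegral_swap hmeas]
  exact lintegral_congr fun x => lintegral_congr fun y => enorm_sub_rev _ _

lemma HasOscillationBound.of_restrict_prod_le [SFinite μ] {c : ℝ≥0∞} (hp : 1 ≤ p)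
    (hν : ν ≪ μ.prod μ) (hA : μ A ≠ ∞) (hB : μ B ≠ ∞) (hc : c ≠ ∞)
    (hle : (μ.prod μ).restrict (A ×ˢ B) ≤ c • ν) : HasOscillationBound F μ ν p A B := by
  rw [← Measure.prod_restrict] at hle
  have : IsFiniteMeasure (μ.restrict A) := ⟨by simpa using hA.lt_top⟩
  have : IsFiniteMeasure (μ.restrict B) := ⟨by simpa using hB.lt_top⟩
  obtain ⟨C, hC, hle⟩ := exists_lintegral_enorm_le_mul_eLpNorm (E := F) hc hle hp
  refine ⟨C, hC, fun f hf => ?_⟩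
  have hmeas : AEStronglyMeasurable (increment f) ((μ.restrict A).prod (μ.restrict B)) :=
    hf.restrict.comp_snd.sub hf.restrict.comp_fst
  exact (lintegral_prod _ hmeas.enorm).symm.trans_le (hle _ (aestronglyMeasurable_increment hf hν))

end Increment

section Poincare

variable {X F : Type*} [TopologicalSpace X] {mX : MeasurableSpace X} [NormedAddCommGroup F]
  [NormedSpace ℝ F] {μ : Measure X} {ν : Measure (X × X)} {p : ℝ≥0∞} {A B B' : Set X}

lemma HasPoincareInequality.mono (h : HasPoincareInequality F μ ν p A B) (hB : B' ⊆ B) :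
    HasPoincareInequality F μ ν p A B' := by
  obtain ⟨C, hC, hle⟩ := h
  exact ⟨C, hC, fun f hf => (lintegral_mono_set hB).trans (hle f hf)⟩

lemma HasPoincareInequality.trans_hasOscillationBound [SecondCountableTopology X]
    (h : HasPoincareInequality F μ ν p A B) (hBB' : HasOscillationBound F μ ν p B B')
    (hB₀ : μ B ≠ 0) (hB : μ B ≠ ∞) (hB' : μ B' ≠ ∞) : HasPoincareInequality F μ ν p A B' := by
  obtain ⟨C₁, hC₁, hle₁⟩ := h
  obtain ⟨C₂, hC₂, hle₂⟩ := hBB'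
  refine ⟨(μ B)⁻¹ * (C₂ + μ B' * C₁), by finiteness, fun f hf => ?_⟩
  have : IsFiniteMeasure (μ.restrict B') := ⟨by simpa using hB'.lt_top⟩
  have hmeas := hf.aestronglyMeasurable
  rw [mul_assoc, ← ENNReal.mul_le_iff_le_inv hB₀ hB]
  calc μ B * ∫⁻ y in B', ‖f y - ⨍ x in A, f x ∂μ‖ₑ ∂μ
      ≤ ∫⁻ x in B, ∫⁻ y in B', ‖f y - f x‖ₑ ∂μ ∂μ
          + μ B' * ∫⁻ x in B, ‖f x - ⨍ x in A, f x ∂μ‖ₑ ∂μ := by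
        simpa only [Measure.restrict_apply_univ] using
          measure_univ_mul_lintegral_enorm_sub_const_le (ρ' := μ.restrict B') (μ.restrict B)
            hmeas.restrict _
    _ ≤ C₂ * eLpNorm (increment f) p ν + μ B' * (C₁ * eLpNorm (increment f) p ν) := by
        gcongr
        exacts [hle₂ f hmeas, hle₁ f hf]
    _ = (C₂ + μ B' * C₁) * eLpNorm (increment f) p ν := by ring

lemma HasOscillationBound.hasPoincareInequality [CompleteSpace F] [SecondCountableTopology X]
    [IsFiniteMeasureOnCompacts μ] {K : Set X} (h : HasOscillationBound F μ ν p A A) (hA : μ A ≠ 0)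
    (hK : IsCompact K) (hAK : A ⊆ K) : HasPoincareInequality F μ ν p A A := by
  obtain ⟨C, hC, hle⟩ := h
  have hA_top : μ A ≠ ∞ := measure_ne_top_of_subset hAK hK.measure_ne_top
  have : IsFiniteMeasure (μ.restrict A) := ⟨by simpa using hA_top.lt_top⟩
  have : NeZero (μ.restrict A) := ⟨by simpa [Measure.restrict_eq_zero] using hA⟩
  refine ⟨(μ A)⁻¹ * C, by finiteness, fun f hf => ?_⟩
  have hint : IntegrableOn f A μ := (hf.integrableOn_isCompact hK).mono_set hAK
  calc ∫⁻ y in A, ‖f y - ⨍ x in A, f x ∂μ‖ₑ ∂μ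
      ≤ ∫⁻ y in A, ⨍⁻ x in A, ‖f y - f x‖ₑ ∂μ ∂μ :=
        lintegral_mono fun y => enorm_sub_average_le hint (f y)
    _ = (μ A)⁻¹ * ∫⁻ y in A, ∫⁻ x in A, ‖f y - f x‖ₑ ∂μ ∂μ := by
        simp only [setLAverage_eq, ENNReal.div_eq_inv_mul]
        exact lintegral_const_mul' _ _ (ENNReal.inv_ne_top.2 hA)
    _ ≤ (μ A)⁻¹ * C * eLpNorm (increment f) p ν := by
        rw [mul_assoc]
        gcongr
        simpa only [enorm_sub_rev] using hle f hf.aestronglyMeasurable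

end Poincare

/-- Points of `X` are equivalent when they are joined by a chain of steps `(x, y)` with `(x, y) ∈ D`
or `(y, x) ∈ D`. -/
def chainSetoid {X : Type*} (D : Set (X × X)) : Setoid X :=
  Relation.EqvGen.setoid fun x y => (x, y) ∈ D

/-- A chosen point of the `chainSetoid D`-class of `x`. -/
noncomputable def chainBasepoint {X : Type*} (D : Set (X × X)) (x : X) : X :=
  (Quotient.mk (chainSetoid D) x).out

/-- The function whose value on each `chainSetoid D`-class is the average of `f` over the
neighbourhood `A b` of the basepoint `b` of that class. -/
noncomputable def chainAverage {X F : Type*} [MeasurableSpace X] [NormedAddCommGroup F]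
    [NormedSpace ℝ F] (μ : Measure X) (D : Set (X × X)) (A : X → Set X) (f : X → F) (x : X) : F :=
  ⨍ y in A (chainBasepoint D x), f y ∂μ

section Chain

variable {X F : Type*} {D : Set (X × X)}

lemma eqvGen_chainBasepoint (D : Set (X × X)) (x : X) :
    Relation.EqvGen (fun x y => (x, y) ∈ D) (chainBasepoint D x) x :=
  Quotient.mk_out (s := chainSetoid D) x

lemma chainBasepoint_eq {z : X × X} (hz : z ∈ D) :
    chainBasepoint D z.1 = chainBasepoint D z.2 :=
  congrArg Quotient.out (Quotient.sound (s := chainSetoid D) (.rel _ _ hz))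

section Average

variable [MeasurableSpace X] [NormedAddCommGroup F] [NormedSpace ℝ F] {μ : Measure X}
  {A : X → Set X}

lemma increment_sub_chainAverage (f : X → F) {z : X × X} (hz : z ∈ D) :
    increment (f - chainAverage μ D A f) z = increment f z := by
  simp only [increment, Pi.sub_apply, chainAverage, chainBasepoint_eq hz, sub_sub_sub_cancel_right]

lemma chainAverage_sub {f g : X → F} (hf : ∀ x, IntegrableOn f (A x) μ)
    (hg : ∀ x, IntegrableOn g (A x) μ) :
    chainAverage μ D A (f - g) = chainAverage μ D A f - chainAverage μ D A g := by
  ext x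
  simp only [chainAverage, Pi.sub_apply, average, integral_sub (hf _).to_average (hg _).to_average]

end Average

variable [TopologicalSpace X]

lemma isLocallyConstant_chainBasepoint (hD : IsOpen D) (hdiag : ∀ x, (x, x) ∈ D) :
    IsLocallyConstant (chainBasepoint D) := by
  refine (IsLocallyConstant.iff_eventually_eq _).2 fun x => ?_
  have hxD : ∀ᶠ y in 𝓝 x, (x, y) ∈ D :=
    (Continuous.prodMk_right x).continuousAt.eventually_mem (hD.mem_nhds (hdiag x))
  exact hxD.mono fun y hy => (chainBasepoint_eq hy).symm

lemma isLocallyConstant_chainAverage [MeasurableSpace X] [NormedAddCommGroup F] [NormedSpace ℝ F]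
    {μ : Measure X} {A : X → Set X} (hD : IsOpen D) (hdiag : ∀ x, (x, x) ∈ D) (f : X → F) :
    IsLocallyConstant (chainAverage μ D A f) :=
  (isLocallyConstant_chainBasepoint hD hdiag).comp fun b => ⨍ y in A b, f y ∂μ

end Chain

namespace IsIncrementMeasure

variable {X F : Type*} [TopologicalSpace X] [SecondCountableTopology X] {mX : MeasurableSpace X}
  [NormedAddCommGroup F] {μ : Measure X} [IsLocallyFiniteMeasure μ]
  {ν : Measure (X × X)} {D : Set (X × X)} {p : ℝ≥0∞} {x y : X}

lemma exists_hasOscillationBound (hν : IsIncrementMeasure μ ν D) (hp : 1 ≤ p) (hxy : (x, y) ∈ D) :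
    ∃ V ∈ 𝓝 x, ∃ W ∈ 𝓝 y, μ V ≠ ∞ ∧ μ W ≠ ∞ ∧ HasOscillationBound F μ ν p V W := by
  obtain ⟨Q, hQ, c, hc, hle⟩ := hν.exists_restrict_le _ hxy
  obtain ⟨V, hV, W, hW, hVW⟩ := mem_nhds_prod_iff.1 hQ
  obtain ⟨V', hV', hV'_top⟩ := μ.finiteAt_nhds x
  obtain ⟨W', hW', hW'_top⟩ := μ.finiteAt_nhds y
  have hV_top : μ (V ∩ V') ≠ ∞ := measure_ne_top_of_subset Set.inter_subset_right hV'_top.ne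
  have hW_top : μ (W ∩ W') ≠ ∞ := measure_ne_top_of_subset Set.inter_subset_right hW'_top.ne
  have hsub : (V ∩ V') ×ˢ (W ∩ W') ⊆ Q :=
    (Set.prod_mono Set.inter_subset_left Set.inter_subset_left).trans hVW
  exact ⟨_, inter_mem hV hV', _, inter_mem hW hW', hV_top, hW_top,
    .of_restrict_prod_le hp hν.absolutelyContinuous hV_top hW_top hc
      ((Measure.restrict_mono hsub le_rfl).trans hle)⟩

variable [NormedSpace ℝ F] [μ.IsOpenPosMeasure]

lemma exists_hasPoincareInequality_self [CompleteSpace F] [WeaklyLocallyCompactSpace X]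
    (hν : IsIncrementMeasure μ ν D) (hp : 1 ≤ p) (x : X) :
    ∃ A ∈ 𝓝 x, (∃ K, IsCompact K ∧ A ⊆ K) ∧ HasPoincareInequality F μ ν p A A := by
  obtain ⟨V, hV, W, hW, -, -, hVW⟩ :=
    hν.exists_hasOscillationBound (F := F) hp (hν.diag_mem x)
  obtain ⟨K, hK, hxK⟩ := exists_compact_mem_nhds x
  have hA : V ∩ W ∩ K ∈ 𝓝 x := inter_mem (inter_mem hV hW) hxK
  have hosc : HasOscillationBound F μ ν p (V ∩ W ∩ K) (V ∩ W ∩ K) :=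
    hVW.mono (fun _ h => h.1.1) fun _ h => h.1.2
  exact ⟨_, hA, ⟨K, hK, Set.inter_subset_right⟩,
    hosc.hasPoincareInequality (μ.measure_pos_of_mem_nhds hA).ne' hK Set.inter_subset_right⟩

lemma exists_hasPoincareInequality_iff (hν : IsIncrementMeasure μ ν D) (hp : 1 ≤ p) (A : Set X)
    (hxy : (x, y) ∈ D) :
    (∃ B ∈ 𝓝 x, HasPoincareInequality F μ ν p A B) ↔
      ∃ B ∈ 𝓝 y, HasPoincareInequality F μ ν p A B := by
  obtain ⟨V, hV, W, hW, hV_top, hW_top, hVW⟩ := hν.exists_hasOscillationBound (F := F) hp hxy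
  constructor
  · rintro ⟨B, hB, hAB⟩
    have hBV : B ∩ V ∈ 𝓝 x := inter_mem hB hV
    exact ⟨W, hW, (hAB.mono Set.inter_subset_left).trans_hasOscillationBound
      (hVW.mono Set.inter_subset_right subset_rfl) (μ.measure_pos_of_mem_nhds hBV).ne'
      (measure_ne_top_of_subset Set.inter_subset_right hV_top) hW_top⟩
  · rintro ⟨B, hB, hAB⟩
    have hBW : B ∩ W ∈ 𝓝 y := inter_mem hB hW
    exact ⟨V, hV, (hAB.mono Set.inter_subset_left).trans_hasOscillationBound
      (hVW.symm.mono Set.inter_subset_right subset_rfl) (μ.measure_pos_of_mem_nhds hBW).ne'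
      (measure_ne_top_of_subset Set.inter_subset_right hW_top) hV_top⟩

lemma exists_hasPoincareInequality_iff_of_eqvGen (hν : IsIncrementMeasure μ ν D) (hp : 1 ≤ p)
    (A : Set X) (hxy : Relation.EqvGen (fun x y => (x, y) ∈ D) x y) :
    (∃ B ∈ 𝓝 x, HasPoincareInequality F μ ν p A B) ↔
      ∃ B ∈ 𝓝 y, HasPoincareInequality F μ ν p A B := by
  induction hxy with
  | rel _ _ hxy => exact hν.exists_hasPoincareInequality_iff hp A hxy
  | refl => rfl
  | symm _ _ _ ih => exact ih.symm
  | trans _ _ _ _ _ ih₁ ih₂ => exact ih₁.trans ih₂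

lemma exists_lintegral_sub_chainAverage_le [OpensMeasurableSpace X]
    (hν : IsIncrementMeasure μ ν D) (hp : 1 ≤ p) {A : X → Set X} (hA : ∀ x, A x ∈ 𝓝 x)
    (hAA : ∀ x, HasPoincareInequality F μ ν p (A x) (A x)) (x : X) :
    ∃ V ∈ 𝓝 x, ∃ C ≠ ∞, ∀ h : X → F, LocallyIntegrable h μ →
      ∫⁻ y in V, ‖h y - chainAverage μ D A h y‖ₑ ∂μ ≤ C * eLpNorm (increment h) p ν := by
  obtain ⟨B, hB, C, hC, hle⟩ :=
    (hν.exists_hasPoincareInequality_iff_of_eqvGen hp _ (eqvGen_chainBasepoint D x)).1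
      ⟨_, hA _, hAA _⟩
  have hconst : ∀ᶠ y in 𝓝 x, chainBasepoint D y = chainBasepoint D x :=
    (isLocallyConstant_chainBasepoint hν.isOpen hν.diag_mem).eventually_eq x
  obtain ⟨V, hVsub, hV, hxV⟩ := mem_nhds_iff.1 (inter_mem hB hconst)
  refine ⟨V, hV.mem_nhds hxV, C, hC, fun h hh => ?_⟩
  calc ∫⁻ y in V, ‖h y - chainAverage μ D A h y‖ₑ ∂μ
      = ∫⁻ y in V, ‖h y - ⨍ z in A (chainBasepoint D x), h z ∂μ‖ₑ ∂μ :=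
        setLIntegral_congr_fun hV.measurableSet fun y hy => by
          simp only [chainAverage, (hVsub hy).2.out]
    _ ≤ C * eLpNorm (increment h) p ν :=
        (lintegral_mono_set (hVsub.trans Set.inter_subset_left)).trans (hle h hh)

lemma exists_ae_tendsto_sub_chainAverage [CompleteSpace F] [OpensMeasurableSpace X]
    [WeaklyLocallyCompactSpace X] (hν : IsIncrementMeasure μ ν D) (hp : 1 ≤ p) {A : X → Set X}
    (hA : ∀ x, A x ∈ 𝓝 x) (hAK : ∀ x, ∃ K, IsCompact K ∧ A x ⊆ K)
    (hAA : ∀ x, HasPoincareInequality F μ ν p (A x) (A x)) {v : ℕ → X → F}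
    (hv : ∀ n, LocallyIntegrable (v n) μ) {b : ℕ → ℝ≥0∞} (hb : ∑' N, b N ≠ ∞)
    (hcauchy : ∀ N n m, N ≤ n → N ≤ m → eLpNorm (increment (v n - v m)) p ν < b N) :
    ∃ g, LocallyIntegrable g μ ∧
      ∀ᵐ x ∂μ, Tendsto (fun n => (v n - chainAverage μ D A (v n)) x) atTop (𝓝 (g x)) := by
  have hint n x : IntegrableOn (v n) (A x) μ :=
    let ⟨_, hK, hAx⟩ := hAK x
    ((hv n).integrableOn_isCompact hK).mono_set hAx
  refine exists_locallyIntegrable_ae_tendsto (fun n => (hv n).sub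
    (isLocallyConstant_chainAverage hν.isOpen hν.diag_mem _).continuous.locallyIntegrable)
    fun x => ?_
  obtain ⟨V, hV, C, hC, hle⟩ := hν.exists_lintegral_sub_chainAverage_le hp hA hAA x
  -- The constant is `C + 1` rather than `C` so that the bound stays strict when `C = 0`.
  refine ⟨V, hV, fun N => (C + 1) * b N, ?_, fun N n m hn hm => ?_⟩
  · rw [ENNReal.tsum_mul_left]
    finiteness
  · have hsub : v n - chainAverage μ D A (v n) - (v m - chainAverage μ D A (v m)) =
        v n - v m - chainAverage μ D A (v n - v m) := by
      rw [chainAverage_sub (hint n) (hint m)]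
      abel
    calc eLpNorm (v n - chainAverage μ D A (v n) - (v m - chainAverage μ D A (v m))) 1
          (μ.restrict V)
        = ∫⁻ y in V, ‖(v n - v m) y - chainAverage μ D A (v n - v m) y‖ₑ ∂μ := by
          rw [hsub, eLpNorm_one_eq_lintegral_enorm]
          rfl
      _ ≤ C * eLpNorm (increment (v n - v m)) p ν := hle _ ((hv n).sub (hv m))
      _ ≤ (C + 1) * eLpNorm (increment (v n - v m)) p ν := by
          gcongr
          exact le_self_add
      _ < (C + 1) * b N := by
          gcongr
          · finiteness
          · exact hcauchy N n m hn hm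

theorem exists_tendsto_eLpNorm_increment_sub [CompleteSpace F] [OpensMeasurableSpace X]
    [WeaklyLocallyCompactSpace X] (hν : IsIncrementMeasure μ ν D) (hp : 1 ≤ p) {f : ℕ → X → F}
    (hf : ∀ n, LocallyIntegrable (f n) μ)
    (hcauchy : ∀ ε > 0, ∃ M, ∀ n ≥ M, ∀ m ≥ M, eLpNorm (increment (f n - f m)) p ν < ε) :
    ∃ g, LocallyIntegrable g μ ∧
      Tendsto (fun n => eLpNorm (increment (f n - g)) p ν) atTop (𝓝 0) := by
  choose A hA hAK hAA using hν.exists_hasPoincareInequality_self (F := F) hp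
  have hfast N : ∀ᶠ M in atTop,
      ∀ n ≥ M, ∀ m ≥ M, eLpNorm (increment (f n - f m)) p ν < 2⁻¹ ^ N := by
    obtain ⟨M, hM⟩ := hcauchy (2⁻¹ ^ N) (ENNReal.pow_pos (by simp) N)
    exact eventually_atTop.2 ⟨M, fun _ hM' n hn m hm => hM n (hM'.trans hn) m (hM'.trans hm)⟩
  obtain ⟨φ, hφ, hφ_fast⟩ := extraction_forall_of_eventually hfast
  obtain ⟨g, hg, hlim⟩ := hν.exists_ae_tendsto_sub_chainAverage hp hA hAK hAA
    (fun k => hf (φ k)) (by simp [ENNReal.tsum_geometric])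
    fun N n m hn hm => hφ_fast N _ (hφ.monotone hn) _ (hφ.monotone hm)
  have hlim_increment : ∀ᵐ z ∂ν,
      Tendsto (fun k => increment (f (φ k)) z) atTop (𝓝 (increment g z)) := by
    have hfst := hν.absolutelyContinuous.ae_le (Measure.quasiMeasurePreserving_fst.ae hlim)
    have hsnd := hν.absolutelyContinuous.ae_le (Measure.quasiMeasurePreserving_snd.ae hlim)
    filter_upwards [hν.ae_mem, hfst, hsnd] with z hz hz₁ hz₂
    exact (hz₂.sub hz₁).congr fun k => increment_sub_chainAverage (f (φ k)) hz
  refine ⟨g, hg, ?_⟩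
  simp only [increment_sub] at hcauchy ⊢
  exact tendsto_eLpNorm_sub_of_cauchy_of_ae_tendsto
    (fun n => aestronglyMeasurable_increment (hf n).aestronglyMeasurable hν.absolutelyContinuous)
    hcauchy hφ.tendsto_atTop hlim_increment

end IsIncrementMeasure

lemma isOpen_setOf_lt_of_semicontinuous {X γ : Type*} [TopologicalSpace X] [LinearOrder γ]
    [DenselyOrdered γ] {f g : X → γ} (hf : UpperSemicontinuous f) (hg : LowerSemicontinuous g) :
    IsOpen {x | f x < g x} := by
  refine isOpen_iff_mem_nhds.2 fun x (hx : f x < g x) => ?_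
  obtain ⟨c, hfc, hcg⟩ := exists_between hx
  filter_upwards [hf x c hfc, hg x c hcg] with y hy₁ hy₂
  exact hy₁.trans hy₂

lemma isIncrementMeasure_withDensity {X : Type*} [TopologicalSpace X] [SecondCountableTopology X]
    [MeasurableSpace X] [OpensMeasurableSpace X] (μ : Measure X) {D : Set (X × X)} (hD : IsOpen D)
    (hdiag : ∀ x, (x, x) ∈ D) {w : X × X → ℝ≥0∞} (hw : LowerSemicontinuous w)
    (hw₀ : ∀ z ∈ D, w z ≠ 0) :
    IsIncrementMeasure μ (((μ.prod μ).restrict D).withDensity w) D where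
  isOpen := hD
  diag_mem := hdiag
  absolutelyContinuous :=
    (withDensity_absolutelyContinuous _ w).trans Measure.restrict_le_self.absolutelyContinuous
  ae_mem := (withDensity_absolutelyContinuous _ w).ae_le (ae_restrict_mem hD.measurableSet)
  exists_restrict_le z hz := by
    obtain ⟨c, hc₀, hcw⟩ := exists_between (pos_iff_ne_zero.2 (hw₀ z hz))
    obtain ⟨V, hVsub, hV, hzV⟩ := mem_nhds_iff.1 (inter_mem (hw z c hcw) (hD.mem_nhds hz))
    exact ⟨V, hV.mem_nhds hzV, c⁻¹, ENNReal.inv_ne_top.2 hc₀.ne',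
      restrict_le_smul_withDensity hV.measurableSet (fun _ hy => (hVsub hy).2) hc₀.ne'
        hcw.ne_top fun _ hy => (hVsub hy).1.out.le⟩

/-- The pairs `(x, y)` with `y` in the ball of radius `σ x` about `x`. -/
def screeningDomain {X : Type*} [EDist X] (σ : X → ℝ≥0∞) : Set (X × X) :=
  {z | edist z.2 z.1 < σ z.1}

/-- The measure on pairs for which the `Lᵖ` norm of increments is the seminorm with kernel
`dist x y ^ (-e)` screened by `σ`. -/
noncomputable def screenedMeasure {X : Type*} [EDist X] [MeasurableSpace X] (μ : Measure X) (e : ℝ)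
    (σ : X → ℝ≥0∞) : Measure (X × X) :=
  ((μ.prod μ).restrict (screeningDomain σ)).withDensity fun z => edist z.2 z.1 ^ (-e)

lemma isOpen_screeningDomain {X : Type*} [PseudoEMetricSpace X] {σ : X → ℝ≥0∞}
    (hσ : LowerSemicontinuous σ) : IsOpen (screeningDomain σ) :=
  isOpen_setOf_lt_of_semicontinuous (continuous_snd.edist continuous_fst).upperSemicontinuous
    (hσ.comp continuous_fst)

lemma isIncrementMeasure_screenedMeasure {X : Type*} [PseudoMetricSpace X]
    [SecondCountableTopology X] [MeasurableSpace X] [OpensMeasurableSpace X] (μ : Measure X)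
    {e : ℝ} (he : 0 ≤ e) {σ : X → ℝ≥0∞} (hσ : LowerSemicontinuous σ) (hσ₀ : ∀ x, 0 < σ x) :
    IsIncrementMeasure μ (screenedMeasure μ e σ) (screeningDomain σ) := by
  refine isIncrementMeasure_withDensity μ (isOpen_screeningDomain hσ)
    (fun x => by simpa [screeningDomain] using hσ₀ x)
    (ENNReal.continuous_rpow_const.comp
      (continuous_snd.edist continuous_fst)).lowerSemicontinuous fun z _ => ?_
  simp [ENNReal.rpow_eq_zero_iff, edist_ne_top, he.not_gt]

lemma edist_rpow_neg_mul_enorm_sub_rpow {X F : Type*} [MetricSpace X] [NormedAddCommGroup F]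
    {p : ℝ} (hp : 0 < p) (e : ℝ) (f : X → F) (x y : X) :
    edist y x ^ (-e) * ‖f y - f x‖ₑ ^ p =
      ENNReal.ofReal (‖f y - f x‖ ^ p / dist y x ^ e) := by
  rcases eq_or_ne y x with rfl | hxy
  · simp [hp, hp.ne']
  · rw [edist_dist, ← ofReal_norm, ENNReal.ofReal_rpow_of_pos (dist_pos.2 hxy),
      ENNReal.ofReal_rpow_of_nonneg (norm_nonneg _) hp.le, ← ENNReal.ofReal_mul (by positivity),
      Real.rpow_neg dist_nonneg, inv_mul_eq_div]

lemma eLpNorm_increment_screenedMeasure {X F : Type*} [MetricSpace X] [SecondCountableTopology X]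
    [MeasurableSpace X] [OpensMeasurableSpace X] [NormedAddCommGroup F] {μ : Measure X} [SFinite μ]
    {p : ℝ} (hp : 0 < p) (e : ℝ) {σ : X → ℝ≥0∞} (hσ : LowerSemicontinuous σ) {f : X → F}
    (hf : AEStronglyMeasurable f μ) :
    eLpNorm (increment f) (ENNReal.ofReal p) (screenedMeasure μ e σ) =
      (∫⁻ x, ∫⁻ y in {y | edist y x < σ x},
        ENNReal.ofReal (‖f y - f x‖ ^ p / dist y x ^ e) ∂μ ∂μ) ^ (1 / p) := by
  have hkernel : Continuous fun z : X × X => edist z.2 z.1 ^ (-e) :=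
    ENNReal.continuous_rpow_const.comp (continuous_snd.edist continuous_fst)
  have hincr : AEMeasurable (fun z => ‖increment f z‖ₑ ^ p) (μ.prod μ) :=
    (aestronglyMeasurable_increment hf .rfl).enorm.pow_const p
  rw [eLpNorm_eq_lintegral_rpow_enorm_toReal (by simpa using hp) ENNReal.ofReal_ne_top,
    ENNReal.toReal_ofReal hp.le, screenedMeasure,
    lintegral_withDensity_eq_lintegral_mul₀ hkernel.aemeasurable hincr.restrict,
    setLIntegral_prod_eq_lintegral_slice (isOpen_screeningDomain hσ).measurableSet
      (hkernel.aemeasurable.mul hincr)]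
  simp only [Pi.mul_apply, increment, edist_rpow_neg_mul_enorm_sub_rpow hp]
  rfl

lemma isLocallyFiniteMeasure_comap_subtypeVal {Y : Type*} [TopologicalSpace Y] [MeasurableSpace Y]
    {U : Set Y} (hU : MeasurableSet U) (μ : Measure Y) [IsLocallyFiniteMeasure μ] :
    IsLocallyFiniteMeasure (μ.comap (Subtype.val : U → Y)) where
  finiteAtNhds x := by
    obtain ⟨V, hV, hV_top⟩ := μ.finiteAt_nhds (x : Y)
    refine ⟨Subtype.val ⁻¹' V, continuous_subtype_val.continuousAt.preimage_mem_nhds hV, ?_⟩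
    rw [(MeasurableEmbedding.subtype_coe hU).comap_apply]
    exact (measure_mono (Set.image_preimage_subset _ _)).trans_lt hV_top

theorem exists_locallyIntegrableOn_tendsto_eLpNorm_increment_sub {Y F : Type*} [MetricSpace Y]
    [LocallyCompactSpace Y] [SecondCountableTopology Y] [MeasurableSpace Y] [BorelSpace Y]
    [NormedAddCommGroup F] [NormedSpace ℝ F] [CompleteSpace F] {μ : Measure Y}
    [IsLocallyFiniteMeasure μ] [μ.IsOpenPosMeasure] {p : ℝ≥0∞} (hp : 1 ≤ p) {e : ℝ} (he : 0 ≤ e)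
    {U : Set Y} (hU : IsOpen U) {σ : Y → ℝ≥0∞} (hσ : LowerSemicontinuousOn σ U)
    (hσ₀ : ∀ x ∈ U, 0 < σ x) {f : ℕ → Y → F} (hf : ∀ n, LocallyIntegrableOn (f n) U μ)
    (hf_top : ∀ n, eLpNorm (increment fun x : U => f n x) p
      (screenedMeasure (μ.comap Subtype.val) e fun x : U => σ x) < ∞)
    (hcauchy : ∀ ε > 0, ∃ M, ∀ n ≥ M, ∀ m ≥ M, eLpNorm (increment fun x : U => f n x - f m x) p
      (screenedMeasure (μ.comap Subtype.val) e fun x : U => σ x) < ε) :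
    ∃ g : Y → F, LocallyIntegrableOn g U μ ∧
      eLpNorm (increment fun x : U => g x) p
        (screenedMeasure (μ.comap Subtype.val) e fun x : U => σ x) < ∞ ∧
      Tendsto (fun n => eLpNorm (increment fun x : U => f n x - g x) p
        (screenedMeasure (μ.comap Subtype.val) e fun x : U => σ x)) atTop (𝓝 0) := by
  have := hU.locallyCompactSpace
  have := isLocallyFiniteMeasure_comap_subtypeVal hU.measurableSet μ
  have : (μ.comap (Subtype.val : U → Y)).IsOpenPosMeasure := .comap _ hU.isOpenEmbedding_subtypeVal
  have hσU : LowerSemicontinuous fun x : U => σ x := lowerSemicontinuous_restrict_iff.2 hσ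
  have hν := isIncrementMeasure_screenedMeasure (μ.comap (Subtype.val : U → Y)) he hσU
    fun x => hσ₀ x x.2
  have hfU n := (locallyIntegrable_comap hU.measurableSet).2 (hf n)
  obtain ⟨g, hg, hlim⟩ := hν.exists_tendsto_eLpNorm_increment_sub hp hfU hcauchy
  have hg_top := eLpNorm_increment_lt_top_of_tendsto hp hν.absolutelyContinuous
    (fun n => (hfU n).aestronglyMeasurable) hg.aestronglyMeasurable hf_top hlim
  obtain ⟨g, rfl⟩ : ∃ g' : Y → F, (fun x : U => g' x) = g :=
    ⟨Function.extend Subtype.val g 0, funext (Subtype.val_injective.extend_apply g 0)⟩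
  exact ⟨g, (locallyIntegrable_comap hU.measurableSet).1 hg, hg_top, hlim⟩

lemma screenedSeminorm_eq_eLpNorm_increment {N : ℕ} {s p : ℝ} (hp : 0 < p)
    {U : Set (EuclideanSpace ℝ (Fin N))} (hU : IsOpen U) {σ : EuclideanSpace ℝ (Fin N) → ℝ≥0∞}
    (hσ : LowerSemicontinuousOn σ U) {f : EuclideanSpace ℝ (Fin N) → ℝ}
    (hf : LocallyIntegrableOn f U) :
    screenedSeminorm N s p U σ f =
      eLpNorm (increment fun x : U => f x) (ENNReal.ofReal p)
        (screenedMeasure (volume.comap Subtype.val) (s * p + N) fun x : U => σ x) := by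
  have hσU : LowerSemicontinuous fun x : U => σ x := lowerSemicontinuous_restrict_iff.2 hσ
  have hfU : AEStronglyMeasurable (fun x : U => f x) (volume.comap Subtype.val) :=
    ((locallyIntegrable_comap hU.measurableSet).2 hf).aestronglyMeasurable
  have : IsLocallyFiniteMeasure (volume.comap (Subtype.val : U → EuclideanSpace ℝ (Fin N))) :=
    isLocallyFiniteMeasure_comap_subtypeVal hU.measurableSet volume
  rw [eLpNorm_increment_screenedMeasure hp _ hσU hfU, screenedSeminorm,
    ← lintegral_subtype_comap hU.measurableSet]
  congr! with x
  rw [← Subtype.image_preimage_coe, ← setLIntegral_subtype hU.measurableSet]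
  rfl

theorem statement8_general (N : ℕ) (U : Set (EuclideanSpace ℝ (Fin N))) (hU : IsOpen U)
    (p s : ℝ) (hp : 1 ≤ p) (hs : 0 ≤ s * p + N)
    (σ : EuclideanSpace ℝ (Fin N) → ℝ≥0∞)
    (hσlsc : LowerSemicontinuousOn σ U) (hσpos : ∀ x ∈ U, 0 < σ x)
    (f : ℕ → EuclideanSpace ℝ (Fin N) → ℝ)
    (hmem : ∀ n, LocallyIntegrableOn (f n) U ∧ screenedSeminorm N s p U σ (f n) < ⊤)
    (hcauchy : ∀ ε : ℝ≥0∞, 0 < ε → ∃ M : ℕ, ∀ n ≥ M, ∀ m ≥ M,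
      screenedSeminorm N s p U σ (fun y => f n y - f m y) < ε) :
    ∃ g : EuclideanSpace ℝ (Fin N) → ℝ,
      LocallyIntegrableOn g U ∧ screenedSeminorm N s p U σ g < ⊤ ∧
      Tendsto (fun n => screenedSeminorm N s p U σ (fun y => f n y - g y))
        atTop (nhds 0) := by
  have hp₀ : 0 < p := by linarith
  have hf n : LocallyIntegrableOn (f n) U := (hmem n).1
  have hseminorm (h : EuclideanSpace ℝ (Fin N) → ℝ) (hh : LocallyIntegrableOn h U) :
      screenedSeminorm N s p U σ h = eLpNorm (increment fun x : U => h x) (ENNReal.ofReal p)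
        (screenedMeasure (volume.comap Subtype.val) (s * p + N) fun x : U => σ x) :=
    screenedSeminorm_eq_eLpNorm_increment hp₀ hU hσlsc hh
  have hseminorm_sub (n : ℕ) {h : EuclideanSpace ℝ (Fin N) → ℝ} (hh : LocallyIntegrableOn h U) :=
    hseminorm (fun y => f n y - h y) ((hf n).sub hh)
  obtain ⟨g, hg, hg_top, hlim⟩ := exists_locallyIntegrableOn_tendsto_eLpNorm_increment_sub
    (by simpa using hp) hs hU hσlsc hσpos hf (fun n => hseminorm _ (hf n) ▸ (hmem n).2)
    (by simpa only [hseminorm_sub _ (hf _)] using hcauchy)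
  exact ⟨g, hg, hseminorm g hg ▸ hg_top, by simpa only [hseminorm_sub _ hg] using hlim⟩

/-- Sequential completeness of the screened space `W̃^{s,p}_{(σ)}(U)`
(the set of `f ∈ L¹_loc(U)` with finite screened seminorm) with respect to its
seminorm: every Cauchy sequence converges in seminorm to an element of the space. -/
theorem statement8 (N : ℕ) (U : Set (EuclideanSpace ℝ (Fin N))) (hU : IsOpen U)
    (p s : ℝ) (hp : 1 ≤ p) (hs0 : 0 < s) (hs1 : s < 1)
    (σ : EuclideanSpace ℝ (Fin N) → ℝ≥0∞)
    (hσlsc : LowerSemicontinuousOn σ U) (hσpos : ∀ x ∈ U, 0 < σ x)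
    (f : ℕ → EuclideanSpace ℝ (Fin N) → ℝ)
    (hmem : ∀ n, LocallyIntegrableOn (f n) U ∧ screenedSeminorm N s p U σ (f n) < ⊤)
    (hcauchy : ∀ ε : ℝ≥0∞, 0 < ε → ∃ M : ℕ, ∀ n ≥ M, ∀ m ≥ M,
      screenedSeminorm N s p U σ (fun y => f n y - f m y) < ε) :
    ∃ g : EuclideanSpace ℝ (Fin N) → ℝ,
      LocallyIntegrableOn g U ∧ screenedSeminorm N s p U σ g < ⊤ ∧
      Tendsto (fun n => screenedSeminorm N s p U σ (fun y => f n y - g y))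
        atTop (nhds 0) :=
  statement8_general N U hU p s hp (by positivity) σ hσlsc hσpos f hmem hcauchy
end

section
/- Let 1 ≤ p < ∞, let Γ ⊆ 𝕊^{N−1} satisfy 𝓗^{N−1}(Γ) > 0, let ρ ≥ 0, and set K_{Γ,ρ} = {x ∈ ℝ^N : ρ < |x| and x/|x| ∈ Γ}. Suppose U ⊆ ℝ^N is open with K_{Γ,ρ} ⊆ U. Then there exists a function u ∈ L¹_loc(U) such that for every s ∈ (0,1): |u|_{W̃^{s,p}_{(1)}(U)} < ∞ and |u|_{Ẇ^{s,p}(U)} = ∞. In particular, for every 0 < s < 1 the inclusion Ẇ^{s,p}(U) ⊊ W̃^{s,p}_{(1)}(U) is strict. -/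
open MeasureTheory Metric
open scoped ENNReal

/-! The function `u` is radial, with `|∇u(x)| ^ p` comparable to `‖x‖ ^ (-N) * (log ‖x‖) ^ (-2)` at
infinity. This is integrable, and on unit balls the difference quotients of `u` are controlled by
`|∇u|`, so the screened seminorm is finite. On the other hand, the pairs of points taken from two
separated annuli at scale `R` in the cone contribute about `R ^ (p * (1 - s)) / (log R) ^ 2` to the
full seminorm, and this is unbounded as soon as the cone has positive volume.

A cone of zero volume has a null slice by almost every hyperplane `x i = t`. The radial projection
of these slices covers `Γ` up to the choice of `i` and of the sign of `t`, and it is Lipschitz away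
from the origin, so `Γ` would be null for the Hausdorff measure.
-/

section Cones

open scoped Pointwise

/-- The annulus of outer radius twice the inner radius `R`. It contains its outer sphere but not its
inner one, so that the annuli with `R = 2 ^ k`, `k : ℤ`, partition the nonzero vectors. -/
def dyadicAnnulus (E : Type*) [NormedAddCommGroup E] (R : ℝ) : Set E := {x | R < ‖x‖ ∧ ‖x‖ ≤ 2 * R}

lemma measurableSet_dyadicAnnulus {E : Type*} [NormedAddCommGroup E] [MeasurableSpace E]
    [OpensMeasurableSpace E] (R : ℝ) : MeasurableSet (dyadicAnnulus E R) :=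
  (measurableSet_lt measurable_const measurable_norm).inter
    (measurableSet_le measurable_norm measurable_const)

variable {E : Type*} [NormedAddCommGroup E] [NormedSpace ℝ E]

/-- The truncated cone `K_{Γ,ρ}` over a set `Γ` of directions. -/
def truncatedCone (Γ : Set E) (ρ : ℝ) : Set E := {x | ρ < ‖x‖ ∧ NormedSpace.normalize x ∈ Γ}

lemma smul_preimage_normalize_inter_dyadicAnnulus (Γ : Set E) {R : ℝ} (hR : 0 < R) (r : ℝ) :
    R • (NormedSpace.normalize ⁻¹' Γ ∩ dyadicAnnulus E r) =
      NormedSpace.normalize ⁻¹' Γ ∩ dyadicAnnulus E (R * r) := by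
  ext x
  rw [Set.mem_smul_set_iff_inv_smul_mem₀ hR.ne']
  simp only [dyadicAnnulus, Set.mem_inter_iff, Set.mem_preimage, Set.mem_ofPred_eq,
    NormedSpace.normalize_smul_of_pos (inv_pos.2 hR), norm_smul_of_nonneg (inv_pos.2 hR).le,
    lt_inv_mul_iff₀ hR, inv_mul_le_iff₀ hR, mul_left_comm]

lemma truncatedCone_zero_subset_iUnion_dyadicAnnulus (Γ : Set E) :
    truncatedCone Γ 0 ⊆ ⋃ k : ℤ, NormedSpace.normalize ⁻¹' Γ ∩ dyadicAnnulus E (2 ^ k) := by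
  rintro x ⟨hx, hxΓ⟩
  obtain ⟨k, hk, hk'⟩ := exists_mem_Ioc_zpow hx one_lt_two
  rw [zpow_add_one₀ two_ne_zero, mul_comm] at hk'
  exact Set.mem_iUnion.2 ⟨k, hxΓ, hk, hk'⟩

section Measure

variable [MeasurableSpace E] [BorelSpace E] [FiniteDimensional ℝ E] (μ : Measure E)
  [μ.IsAddHaarMeasure]

lemma addHaar_preimage_normalize_inter_dyadicAnnulus (Γ : Set E) {R : ℝ} (hR : 0 < R) :
    μ (NormedSpace.normalize ⁻¹' Γ ∩ dyadicAnnulus E R) = ENNReal.ofReal (R ^ Module.finrank ℝ E) *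
      μ (NormedSpace.normalize ⁻¹' Γ ∩ dyadicAnnulus E 1) := by
  rw [← μ.addHaar_smul_of_nonneg hR.le, smul_preimage_normalize_inter_dyadicAnnulus Γ hR, mul_one]

lemma addHaar_truncatedCone_zero_eq_zero {Γ : Set E}
    (hΓ : μ (NormedSpace.normalize ⁻¹' Γ ∩ dyadicAnnulus E 1) = 0) :
    μ (truncatedCone Γ 0) = 0 := by
  refine measure_mono_null (truncatedCone_zero_subset_iUnion_dyadicAnnulus Γ)
    (measure_iUnion_null fun k ↦ ?_)
  rw [addHaar_preimage_normalize_inter_dyadicAnnulus μ Γ (by positivity), hΓ, mul_zero]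

lemma ofReal_pow_mul_le_addHaar_inter_dyadicAnnulus {Γ U : Set E} {ρ R : ℝ} (hR : 0 < R)
    (hρR : ρ ≤ R) (hU : truncatedCone Γ ρ ⊆ U) :
    ENNReal.ofReal (R ^ Module.finrank ℝ E) *
        μ (NormedSpace.normalize ⁻¹' Γ ∩ dyadicAnnulus E 1) ≤ μ (U ∩ dyadicAnnulus E R) := by
  rw [← addHaar_preimage_normalize_inter_dyadicAnnulus μ Γ hR]
  exact measure_mono fun x ⟨hxΓ, hx⟩ ↦ ⟨hU ⟨hρR.trans_lt hx.1, hxΓ⟩, hx⟩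

end Measure

lemma norm_mul_dist_normalize_le (x y : E) :
    ‖x‖ * dist (NormedSpace.normalize x) (NormedSpace.normalize y) ≤ 2 * dist x y := by
  have hy : ‖NormedSpace.normalize y‖ ≤ 1 := by
    rcases eq_or_ne y 0 with rfl | hy
    · simp
    · exact (NormedSpace.norm_normalize hy).le
  have hdiff : ‖x‖ • (NormedSpace.normalize x - NormedSpace.normalize y) =
      (x - y) + (‖y‖ - ‖x‖) • NormedSpace.normalize y := by
    simp only [smul_sub, sub_smul, NormedSpace.norm_smul_normalize]
    abel
  calc ‖x‖ * dist (NormedSpace.normalize x) (NormedSpace.normalize y)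
      = ‖(x - y) + (‖y‖ - ‖x‖) • NormedSpace.normalize y‖ := by
        rw [← hdiff, norm_smul, norm_norm, dist_eq_norm]
    _ ≤ ‖x - y‖ + |‖y‖ - ‖x‖| * ‖NormedSpace.normalize y‖ := by
        grw [norm_add_le, norm_smul, Real.norm_eq_abs]
    _ ≤ ‖x - y‖ + ‖x - y‖ * 1 := by
        grw [hy, abs_norm_sub_norm_le y x, norm_sub_rev y x]
    _ = 2 * dist x y := by rw [dist_eq_norm]; ring

lemma lipschitzOnWith_normalize {a : NNReal} (ha : 0 < a) :
    LipschitzOnWith (2 / a) (NormedSpace.normalize : E → E) {x | a ≤ ‖x‖} := by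
  refine LipschitzOnWith.of_dist_le_mul fun x (hx : a ≤ ‖x‖) y _ ↦ ?_
  rw [NNReal.coe_div, NNReal.coe_ofNat, div_mul_eq_mul_div, le_div_iff₀' (NNReal.coe_pos.2 ha)]
  grw [hx, norm_mul_dist_normalize_le]

end Cones

section Slices

variable {n : ℕ}

/-- The parametrization by `ℝⁿ` of the hyperplane `{x | x i = t}` of `ℝⁿ⁺¹`. The parameter space
carries the sup norm, for which Lebesgue measure is the `n`-dimensional Hausdorff measure. -/
noncomputable def hyperplaneChart (i : Fin (n + 1)) (t : ℝ) (w : Fin n → ℝ) :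
    EuclideanSpace ℝ (Fin (n + 1)) :=
  WithLp.toLp 2 (i.insertNth t w)

@[simp]
lemma hyperplaneChart_apply_self (i : Fin (n + 1)) (t : ℝ) (w : Fin n → ℝ) :
    hyperplaneChart i t w i = t := by
  simp [hyperplaneChart]

lemma hyperplaneChart_removeNth (i : Fin (n + 1)) (x : EuclideanSpace ℝ (Fin (n + 1))) :
    hyperplaneChart i (x i) (i.removeNth x) = x := by
  ext j
  simp [hyperplaneChart]

lemma exists_lipschitzWith_hyperplaneChart (i : Fin (n + 1)) (t : ℝ) :
    ∃ K, LipschitzWith K (hyperplaneChart i t) := by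
  have hinsert : LipschitzWith 1 fun w : Fin n → ℝ ↦ i.insertNth (α := fun _ ↦ ℝ) t w :=
    LipschitzWith.of_dist_le_mul fun v w ↦ by simp [Fin.dist_insertNth_insertNth]
  exact ⟨_, (PiLp.lipschitzWith_toLp 2 (fun _ : Fin (n + 1) ↦ ℝ)).comp hinsert⟩

lemma ae_volume_preimage_hyperplaneChart_eq_zero (i : Fin (n + 1))
    {s : Set (EuclideanSpace ℝ (Fin (n + 1)))} (hs : volume s = 0) :
    ∀ᵐ t, volume (hyperplaneChart i t ⁻¹' s) = 0 := by
  have hchart := (PiLp.volume_preserving_toLp (Fin (n + 1))).comp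
    (volume_preserving_piFinSuccAbove (fun _ : Fin (n + 1) ↦ ℝ) i).symm
  exact Measure.measure_ae_null_of_prod_null (hchart.quasiMeasurePreserving.preimage_null hs)

-- The cone is invariant under dilations, so a point `x` of `Γ` with `x i` of the sign of `t` is the
-- radial projection of a point of the cone at height `t`.
lemma inter_subset_image_normalize_comp_hyperplaneChart
    {Γ : Set (EuclideanSpace ℝ (Fin (n + 1)))} (hΓ : Γ ⊆ sphere 0 1) (i : Fin (n + 1)) (t : ℝ) :
    Γ ∩ {x | 0 < t * x i} ⊆
      NormedSpace.normalize ∘ hyperplaneChart i t ''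
        (hyperplaneChart i t ⁻¹' truncatedCone Γ 0) := by
  rintro x ⟨hxΓ, hx : 0 < t * x i⟩
  have hxnorm : ‖x‖ = 1 := mem_sphere_zero_iff_norm.1 (hΓ hxΓ)
  have hxi : x i ≠ 0 := right_ne_zero_of_mul hx.ne'
  have hscale : 0 < t / x i := by
    rw [← mul_div_mul_right t (x i) hxi]
    exact div_pos hx (mul_self_pos.2 hxi)
  set y := (t / x i) • x with hy
  have hyi : y i = t := by simp [hy, hxi]
  have hchart : hyperplaneChart i t (i.removeNth y) = y := by
    rw [← hyi, hyperplaneChart_removeNth]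
  have hynormalize : NormedSpace.normalize y = x := by
    rw [hy, NormedSpace.normalize_smul_of_pos hscale,
      NormedSpace.normalize_eq_self_of_norm_eq_one hxnorm]
  refine ⟨i.removeNth y, ?_, ?_⟩
  · rw [Set.mem_preimage, hchart]
    exact ⟨by simp [hy, norm_smul_of_nonneg hscale.le, hxnorm, hscale], hynormalize ▸ hxΓ⟩
  · rw [Function.comp_apply, hchart, hynormalize]

lemma hausdorffMeasure_inter_setOf_mul_pos_eq_zero
    {Γ : Set (EuclideanSpace ℝ (Fin (n + 1)))} (hΓ : Γ ⊆ sphere 0 1) {i : Fin (n + 1)} {t : ℝ}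
    (ht : t ≠ 0) (hslice : volume (hyperplaneChart i t ⁻¹' truncatedCone Γ 0) = 0) :
    μH[n] (Γ ∩ {x | 0 < t * x i}) = 0 := by
  obtain ⟨K, hK⟩ := exists_lipschitzWith_hyperplaneChart i t
  have hfar (w : Fin n → ℝ) : ‖t‖₊ ≤ ‖hyperplaneChart i t w‖ := by
    simpa using PiLp.norm_apply_le (hyperplaneChart i t w) i
  have hlip := ((lipschitzOnWith_normalize (nnnorm_pos.2 ht)).comp (hK.lipschitzOnWith)
    fun w _ ↦ hfar w).mono (Set.subset_univ (hyperplaneChart i t ⁻¹' truncatedCone Γ 0))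
  have hslice' : μH[n] (hyperplaneChart i t ⁻¹' truncatedCone Γ 0) = 0 := by
    rwa [← hausdorffMeasure_pi_real, Fintype.card_fin] at hslice
  have himage := hlip.hausdorffMeasure_image_le n.cast_nonneg
  rw [hslice', mul_zero, nonpos_iff_eq_zero] at himage
  exact measure_mono_null (inter_subset_image_normalize_comp_hyperplaneChart hΓ i t) himage

lemma hausdorffMeasure_eq_zero_of_volume_truncatedCone_eq_zero
    {Γ : Set (EuclideanSpace ℝ (Fin (n + 1)))} (hΓ : Γ ⊆ sphere 0 1)
    (hcone : volume (truncatedCone Γ 0) = 0) : μH[n] Γ = 0 := by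
  have hhalf (i : Fin (n + 1)) {I : Set ℝ} (hI : volume I ≠ 0) :
      ∃ t ∈ I, volume (hyperplaneChart i t ⁻¹' truncatedCone Γ 0) = 0 :=
    Measure.exists_mem_of_measure_ne_zero_of_ae hI
      (ae_restrict_of_ae (ae_volume_preimage_hyperplaneChart_eq_zero i hcone))
  have hcover : Γ ⊆ ⋃ i, (Γ ∩ {x | 0 < x i}) ∪ (Γ ∩ {x | x i < 0}) := by
    intro x hx
    have hx0 : x ≠ 0 := ne_zero_of_mem_unit_sphere ⟨x, hΓ hx⟩
    obtain ⟨i, hi⟩ : ∃ i, x i ≠ 0 := by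
      by_contra! h
      exact hx0 (PiLp.ext h)
    exact Set.mem_iUnion.2 ⟨i, hi.lt_or_gt.symm.imp (⟨hx, ·⟩) (⟨hx, ·⟩)⟩
  refine measure_mono_null hcover (measure_iUnion_null fun i ↦ measure_union_null ?_ ?_)
  · obtain ⟨t, ht : 0 < t, hslice⟩ := hhalf i (I := Set.Ioi 0) (by simp)
    exact measure_mono_null (Set.inter_subset_inter_right Γ fun x (hx : 0 < x i) ↦ mul_pos ht hx)
      (hausdorffMeasure_inter_setOf_mul_pos_eq_zero hΓ ht.ne' hslice)
  · obtain ⟨t, ht : t < 0, hslice⟩ := hhalf i (I := Set.Iio 0) (by simp)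
    exact measure_mono_null (Set.inter_subset_inter_right Γ fun x (hx : x i < 0) ↦
        mul_pos_of_neg_of_neg ht hx)
      (hausdorffMeasure_inter_setOf_mul_pos_eq_zero hΓ ht.ne hslice)

end Slices

lemma volume_preimage_normalize_inter_dyadicAnnulus_one_ne_zero {N : ℕ} [NeZero N]
    {Γ : Set (EuclideanSpace ℝ (Fin N))} (hΓ : Γ ⊆ sphere 0 1) (hΓpos : 0 < μH[(N : ℝ) - 1] Γ) :
    volume (NormedSpace.normalize ⁻¹' Γ ∩ dyadicAnnulus (EuclideanSpace ℝ (Fin N)) 1) ≠ 0 := by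
  obtain ⟨n, rfl⟩ := Nat.exists_eq_succ_of_ne_zero (NeZero.ne N)
  rw [Nat.cast_succ, add_sub_cancel_right] at hΓpos
  exact fun hnull ↦ hΓpos.ne' <| hausdorffMeasure_eq_zero_of_volume_truncatedCone_eq_zero hΓ <|
    addHaar_truncatedCone_zero_eq_zero volume hnull

section RadialPrimitive

variable {E : Type*} [NormedAddCommGroup E] {w : ℝ → ℝ}

/-- The radial function on `E` whose derivative in the radial direction is `w ‖x‖`. -/
noncomputable def radialPrimitive (w : ℝ → ℝ) (x : E) : ℝ := ∫ t in 0..‖x‖, w t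

lemma continuous_radialPrimitive (hw : Antitone w) :
    Continuous (radialPrimitive w : E → ℝ) :=
  (intervalIntegral.continuous_primitive (fun _ _ ↦ hw.intervalIntegrable) 0).comp continuous_norm

lemma radialPrimitive_sub (hw : Antitone w) (x y : E) :
    radialPrimitive w y - radialPrimitive w x = ∫ t in ‖x‖..‖y‖, w t :=
  intervalIntegral.integral_interval_sub_left hw.intervalIntegrable hw.intervalIntegrable

lemma abs_radialPrimitive_sub_le (hw : Antitone w) (hw0 : ∀ t, 0 ≤ w t) {x y : E} {a : ℝ}
    (hx : a ≤ ‖x‖) (hy : a ≤ ‖y‖) :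
    |radialPrimitive w y - radialPrimitive w x| ≤ w a * dist y x := by
  have hbound : ∀ t ∈ Set.uIoc ‖x‖ ‖y‖, ‖w t‖ ≤ w a := fun t ht ↦ by
    rw [Real.norm_of_nonneg (hw0 t)]
    exact hw ((le_min hx hy).trans ht.1.le)
  grw [radialPrimitive_sub hw, ← Real.norm_eq_abs,
    intervalIntegral.norm_integral_le_of_norm_le_const hbound, abs_norm_sub_norm_le, dist_eq_norm]
  exact hw0 a

lemma mul_norm_sub_norm_le_radialPrimitive_sub (hw : Antitone w) {x y : E} {b : ℝ}
    (hxy : ‖x‖ ≤ ‖y‖) (hy : ‖y‖ ≤ b) :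
    w b * (‖y‖ - ‖x‖) ≤ radialPrimitive w y - radialPrimitive w x := by
  rw [radialPrimitive_sub hw, mul_comm, ← smul_eq_mul, ← intervalIntegral.integral_const]
  exact intervalIntegral.integral_mono_on hxy intervalIntegrable_const hw.intervalIntegrable
    fun t ht ↦ hw (ht.2.trans hy)

end RadialPrimitive

section ScreenedSeminorm

lemma abs_sub_rpow_div_dist_rpow {X : Type*} [MetricSpace X] (f : X → ℝ) (x y : X) {p : ℝ}
    (hp : 0 < p) (s d : ℝ) :
    |f y - f x| ^ p / dist y x ^ (s * p + d) =
      (|f y - f x| / dist y x) ^ p * dist y x ^ (p * (1 - s) - d) := by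
  rcases eq_or_ne y x with rfl | hyx
  · simp [Real.zero_rpow hp.ne']
  · have hdist : 0 < dist y x := dist_pos.2 hyx
    rw [Real.div_rpow (abs_nonneg _) hdist.le, div_mul_eq_mul_div, mul_div_assoc,
      ← Real.rpow_sub hdist, div_eq_mul_inv, ← Real.rpow_neg hdist.le]
    ring_nf

lemma setLIntegral_ball_comp_sub {E : Type*} [NormedAddCommGroup E] [MeasurableSpace E]
    [BorelSpace E] (μ : Measure E) [μ.IsAddRightInvariant] (f : E → ℝ≥0∞) (x : E) (r : ℝ) :
    ∫⁻ y in ball x r, f (y - x) ∂μ = ∫⁻ z in ball 0 r, f z ∂μ := by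
  have hball : (· - x) ⁻¹' ball 0 r = ball x r := by
    ext y
    simp [dist_eq_norm]
  rw [← hball]
  exact (measurePreserving_sub_right μ x).setLIntegral_comp_preimage_emb
    (measurableEmbedding_subRight x) f _

lemma lintegral_ball_norm_rpow_lt_top {E : Type*} [NormedAddCommGroup E] [NormedSpace ℝ E]
    [Nontrivial E] [FiniteDimensional ℝ E] [MeasurableSpace E] [BorelSpace E] (μ : Measure E)
    [μ.IsAddHaarMeasure] {a : ℝ} (ha : -Module.finrank ℝ E < a) {r : ℝ} (hr : 0 < r) :
    ∫⁻ z in ball (0 : E) r, ENNReal.ofReal (‖z‖ ^ a) ∂μ < ⊤ := by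
  refine IntegrableOn.setLIntegral_lt_top
    ((integrableOn_fun_norm_addHaar μ (f := fun t ↦ t ^ a)).2 ?_)
  have hpow : IntegrableOn (fun t : ℝ ↦ t ^ (a + Module.finrank ℝ E - 1)) (Set.Ioo 0 r) :=
    (intervalIntegral.integrableOn_Ioo_rpow_iff hr).2 (by linarith)
  refine hpow.congr_fun (fun t ht ↦ ?_) measurableSet_Ioo
  rw [smul_eq_mul, ← Real.rpow_natCast, ← Real.rpow_add ht.1,
    Nat.cast_pred Module.finrank_pos]
  ring_nf

lemma mul_measure_le_lintegral {α : Type*} [MeasurableSpace α] {μ : Measure α} {A : Set α}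
    (hA : MeasurableSet A) {f : α → ℝ≥0∞} {k : ℝ≥0∞} (hk : ∀ x ∈ A, k ≤ f x) :
    k * μ A ≤ ∫⁻ x, f x ∂μ := by
  rw [← setLIntegral_const]
  exact (setLIntegral_mono' hA hk).trans (setLIntegral_le_lintegral A f)

section Radial

variable {E : Type*} [NormedAddCommGroup E] {w : ℝ → ℝ} {p s : ℝ}

lemma radialPrimitive_quotient_le (hw : Antitone w) (hw0 : ∀ t, 0 ≤ w t) (hp : 0 < p) (d : ℝ)
    {x y : E} (hxy : dist y x ≤ 1) :
    |radialPrimitive w y - radialPrimitive w x| ^ p / dist y x ^ (s * p + d) ≤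
      w (‖x‖ - 1) ^ p * ‖y - x‖ ^ (p * (1 - s) - d) := by
  have hnorm : ‖x‖ - 1 ≤ ‖y‖ := by
    have := norm_sub_norm_le x y
    rw [dist_eq_norm'] at hxy
    linarith
  rw [abs_sub_rpow_div_dist_rpow _ _ _ hp, ← dist_eq_norm]
  gcongr
  exact div_le_of_le_mul₀ dist_nonneg (hw0 _)
    (abs_radialPrimitive_sub_le hw hw0 (sub_le_self _ zero_le_one) hnorm)

lemma le_radialPrimitive_quotient (hw : Antitone w) (hw0 : ∀ t, 0 ≤ w t) (hp : 0 < p)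
    (hs : s < 1) (d : ℕ) {R : ℝ} {x y : E} (hx : x ∈ dyadicAnnulus E (R / 8))
    (hy : y ∈ dyadicAnnulus E (R / 2)) :
    (w R / 5) ^ p * (R / 4) ^ (p * (1 - s)) / (5 * R / 4) ^ d ≤
      |radialPrimitive w y - radialPrimitive w x| ^ p / dist y x ^ (s * p + d) := by
  obtain ⟨hx, hx'⟩ := hx
  obtain ⟨hy, hy'⟩ := hy
  have hR : 0 < R := by linarith
  have hdist_ge : R / 4 ≤ dist y x := by
    have := norm_sub_norm_le y x
    rw [dist_eq_norm]
    linarith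
  have hdist_le : dist y x ≤ 5 * R / 4 := by
    have := norm_sub_le y x
    rw [dist_eq_norm]
    linarith
  have hdist : 0 < dist y x := by linarith
  have hquot : w R / 5 ≤ |radialPrimitive w y - radialPrimitive w x| / dist y x := by
    rw [le_div_iff₀ hdist]
    calc w R / 5 * dist y x ≤ w R / 5 * (5 * R / 4) :=
          mul_le_mul_of_nonneg_left hdist_le (div_nonneg (hw0 R) (by norm_num))
      _ = w R * (R / 4) := by ring
      _ ≤ w R * (‖y‖ - ‖x‖) := mul_le_mul_of_nonneg_left (by linarith) (hw0 R)
      _ ≤ radialPrimitive w y - radialPrimitive w x :=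
        mul_norm_sub_norm_le_radialPrimitive_sub hw (by linarith) (by linarith)
      _ ≤ |radialPrimitive w y - radialPrimitive w x| := le_abs_self _
  have hδ : 0 ≤ p * (1 - s) := mul_nonneg hp.le (sub_nonneg.2 hs.le)
  have hwR := hw0 R
  rw [abs_sub_rpow_div_dist_rpow _ _ _ hp, Real.rpow_sub_natCast hdist.ne', ← mul_div_assoc]
  have hpow := Real.rpow_le_rpow (by positivity) hdist_ge hδ
  gcongr

variable [MeasurableSpace E] [BorelSpace E]

lemma setLIntegral_radialPrimitive_quotient_le (μ : Measure E) [μ.IsAddRightInvariant]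
    (hw : Antitone w) (hw0 : ∀ t, 0 ≤ w t) (hp : 0 < p) (d : ℝ) (x : E) :
    ∫⁻ y in ball x 1, ENNReal.ofReal
        (|radialPrimitive w y - radialPrimitive w x| ^ p / dist y x ^ (s * p + d)) ∂μ ≤
      ENNReal.ofReal (w (‖x‖ - 1) ^ p) *
        ∫⁻ z in ball (0 : E) 1, ENNReal.ofReal (‖z‖ ^ (p * (1 - s) - d)) ∂μ := by
  rw [← setLIntegral_ball_comp_sub μ _ x, ← lintegral_const_mul' _ _ ENNReal.ofReal_ne_top]
  refine setLIntegral_mono' measurableSet_ball fun y hy ↦ ?_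
  rw [← ENNReal.ofReal_mul (Real.rpow_nonneg (hw0 _) p)]
  exact ENNReal.ofReal_le_ofReal (radialPrimitive_quotient_le hw hw0 hp d (mem_ball.1 hy).le)

lemma mul_measure_mul_measure_le_lintegral_radialPrimitive_quotient (μ : Measure E)
    (hw : Antitone w) (hw0 : ∀ t, 0 ≤ w t) (hp : 0 < p) (hs : s < 1) (d : ℕ) (U : Set E) (R : ℝ) :
    ENNReal.ofReal ((w R / 5) ^ p * (R / 4) ^ (p * (1 - s)) / (5 * R / 4) ^ d) *
        μ (U ∩ dyadicAnnulus E (R / 2)) * μ (U ∩ dyadicAnnulus E (R / 8)) ≤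
      ∫⁻ x in U, ∫⁻ y in U, ENNReal.ofReal
        (|radialPrimitive w y - radialPrimitive w x| ^ p / dist y x ^ (s * p + d)) ∂μ ∂μ := by
  rw [Set.inter_comm U, Set.inter_comm U,
    ← Measure.restrict_apply (measurableSet_dyadicAnnulus _),
    ← Measure.restrict_apply (measurableSet_dyadicAnnulus _)]
  exact mul_measure_le_lintegral (measurableSet_dyadicAnnulus _) fun x hx ↦
    mul_measure_le_lintegral (measurableSet_dyadicAnnulus _) fun y hy ↦
      ENNReal.ofReal_le_ofReal (le_radialPrimitive_quotient hw hw0 hp hs d hx hy)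

lemma rpow_mul_rpow_le_lintegral_radialPrimitive_quotient (μ : Measure E) (hw : Antitone w)
    (hw0 : ∀ t, 0 ≤ w t) (hp : 0 < p) (hs : s < 1) (d : ℕ) {U : Set E} {c : ℝ≥0∞} {R : ℝ}
    (hR : 0 < R) (houter : ENNReal.ofReal ((R / 2) ^ d) * c ≤ μ (U ∩ dyadicAnnulus E (R / 2)))
    (hinner : ENNReal.ofReal ((R / 8) ^ d) * c ≤ μ (U ∩ dyadicAnnulus E (R / 8))) :
    c * c * ENNReal.ofReal
        ((5 ^ p * 4 ^ (p * (1 - s)) * 20 ^ d)⁻¹ * (R ^ (d + p * (1 - s)) * w R ^ p)) ≤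
      ∫⁻ x in U, ∫⁻ y in U, ENNReal.ofReal
        (|radialPrimitive w y - radialPrimitive w x| ^ p / dist y x ^ (s * p + d)) ∂μ ∂μ := by
  have hwR := hw0 R
  have hscale : R ^ d / 20 ^ d = (R / 2) ^ d * (R / 8) ^ d / (5 * R / 4) ^ d := by
    rw [← mul_pow, ← div_pow, ← div_pow]
    congr 1
    field_simp
    norm_num
  have hfactor : (5 ^ p * 4 ^ (p * (1 - s)) * 20 ^ d)⁻¹ * (R ^ (d + p * (1 - s)) * w R ^ p) =
      (w R / 5) ^ p * (R / 4) ^ (p * (1 - s)) / (5 * R / 4) ^ d * (R / 2) ^ d * (R / 8) ^ d := by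
    calc (5 ^ p * 4 ^ (p * (1 - s)) * 20 ^ d)⁻¹ * (R ^ (d + p * (1 - s)) * w R ^ p)
        = (w R / 5) ^ p * (R / 4) ^ (p * (1 - s)) * (R ^ d / 20 ^ d) := by
          rw [Real.div_rpow hwR (by norm_num), Real.div_rpow hR.le (by norm_num),
            Real.rpow_add hR, Real.rpow_natCast]
          ring
      _ = _ := by rw [hscale]; ring
  calc c * c * ENNReal.ofReal _
      = ENNReal.ofReal ((w R / 5) ^ p * (R / 4) ^ (p * (1 - s)) / (5 * R / 4) ^ d) *
          (ENNReal.ofReal ((R / 2) ^ d) * c) * (ENNReal.ofReal ((R / 8) ^ d) * c) := by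
        rw [hfactor, ENNReal.ofReal_mul (by positivity), ENNReal.ofReal_mul (by positivity)]
        ring
    _ ≤ _ := by
        grw [houter, hinner]
        exact mul_measure_mul_measure_le_lintegral_radialPrimitive_quotient μ hw hw0 hp hs d U R

end Radial

variable {N : ℕ} {w : ℝ → ℝ} {p s : ℝ}

lemma screenedSeminorm_top (s p : ℝ) (U : Set (EuclideanSpace ℝ (Fin N)))
    (f : EuclideanSpace ℝ (Fin N) → ℝ) :
    screenedSeminorm N s p U (fun _ ↦ ⊤) f =
      (∫⁻ x in U, ∫⁻ y in U, ENNReal.ofReal (|f y - f x| ^ p / dist y x ^ (s * p + N))) ^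
        (1 / p) := by
  simp [screenedSeminorm, edist_lt_top]

lemma screenedSeminorm_one_radialPrimitive_lt_top [NeZero N] (hw : Antitone w)
    (hw0 : ∀ t, 0 ≤ w t) (hp : 0 < p) (hs : s < 1)
    (hint : ∫⁻ x : EuclideanSpace ℝ (Fin N), ENNReal.ofReal (w (‖x‖ - 1) ^ p) < ⊤)
    (U : Set (EuclideanSpace ℝ (Fin N))) :
    screenedSeminorm N s p U (fun _ ↦ 1) (radialPrimitive w) < ⊤ := by
  have hkernel : ∫⁻ z in ball (0 : EuclideanSpace ℝ (Fin N)) 1,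
      ENNReal.ofReal (‖z‖ ^ (p * (1 - s) - N)) < ⊤ := by
    refine lintegral_ball_norm_rpow_lt_top volume ?_ one_pos
    have := mul_pos hp (sub_pos.2 hs)
    rw [finrank_euclideanSpace_fin]
    linarith
  have hball (x : EuclideanSpace ℝ (Fin N)) : {y | edist y x < 1} = ball x 1 := by
    rw [← Metric.eball_ofReal, ENNReal.ofReal_one, Metric.eball]
  refine ENNReal.rpow_lt_top_of_nonneg (one_div_nonneg.2 hp.le) (ne_of_lt ?_)
  refine lt_of_le_of_lt ?_ (ENNReal.mul_lt_top hint hkernel)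
  rw [← lintegral_mul_const' _ _ hkernel.ne]
  refine (setLIntegral_le_lintegral U _).trans (lintegral_mono fun x ↦ ?_)
  rw [hball]
  exact (lintegral_mono_set Set.inter_subset_right).trans
    (setLIntegral_radialPrimitive_quotient_le volume hw hw0 hp N x)

open Filter Topology in
lemma screenedSeminorm_top_radialPrimitive_eq_top (hw : Antitone w) (hw0 : ∀ t, 0 ≤ w t)
    (hp : 0 < p) (hs : s < 1)
    (hgrowth : Tendsto (fun R ↦ R ^ (N + p * (1 - s)) * w R ^ p) atTop atTop)
    {U : Set (EuclideanSpace ℝ (Fin N))} {c : ℝ≥0∞} (hc : c ≠ 0)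
    (hU : ∀ᶠ R in atTop, ENNReal.ofReal (R ^ N) * c ≤
      volume (U ∩ dyadicAnnulus (EuclideanSpace ℝ (Fin N)) R)) :
    screenedSeminorm N s p U (fun _ ↦ ⊤) (radialPrimitive w) = ⊤ := by
  rw [screenedSeminorm_top, ENNReal.rpow_eq_top_iff_of_pos (one_div_pos.2 hp), eq_top_iff]
  let C : ℝ := (5 ^ p * 4 ^ (p * (1 - s)) * 20 ^ N)⁻¹
  have hlim : Tendsto (fun R ↦ c * c * ENNReal.ofReal (C * (R ^ (N + p * (1 - s)) * w R ^ p)))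
      atTop (𝓝 ⊤) := by
    have := ENNReal.Tendsto.const_mul (a := c * c) (ENNReal.tendsto_ofReal_atTop.comp
      (hgrowth.const_mul_atTop (show 0 < C by positivity))) (.inl ENNReal.top_ne_zero)
    rwa [ENNReal.mul_top (mul_ne_zero hc hc)] at this
  have hscale (k : ℝ) (hk : 0 < k) : ∀ᶠ R in atTop, ENNReal.ofReal ((R / k) ^ N) * c ≤
      volume (U ∩ dyadicAnnulus (EuclideanSpace ℝ (Fin N)) (R / k)) :=
    (tendsto_id.atTop_div_const hk).eventually hU
  refine le_of_tendsto hlim ?_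
  filter_upwards [eventually_gt_atTop 0, hscale 2 two_pos, hscale 8 (by norm_num)]
    with R hR houter hinner
  exact rpow_mul_rpow_le_lintegral_radialPrimitive_quotient volume hw hw0 hp hs N hR houter hinner

end ScreenedSeminorm

section LogWeight

open Filter Topology

/-- The density `(r ^ d * log r ^ 2)⁻¹` at `r = max t 0 + 3`. With `t = ‖x‖` it is
integrable over a `d`-dimensional space, thanks to the logarithm, yet it decays more slowly than
`t ^ (-d - δ)` for every `δ > 0`. Truncating at `0` and adding `3` keep `log r` positive. -/
noncomputable def logWeight (d : ℕ) (t : ℝ) : ℝ :=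
  ((max t 0 + 3) ^ d * Real.log (max t 0 + 3) ^ 2)⁻¹

lemma logWeight_nonneg (d : ℕ) (t : ℝ) : 0 ≤ logWeight d t := by
  unfold logWeight
  positivity

lemma antitone_logWeight (d : ℕ) : Antitone (logWeight d) := by
  intro a b hab
  have hlog : 0 < Real.log (max a 0 + 3) := Real.log_pos (by linarith [le_max_right a 0])
  unfold logWeight
  gcongr

lemma pow_mul_logWeight_sub_one_le {d : ℕ} (hd : d ≠ 0) {t : ℝ} (ht : 0 < t) :
    t ^ (d - 1) * logWeight d (t - 1) ≤ (t + 2)⁻¹ / Real.log (t + 2) ^ 2 := by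
  have hmax : t + 2 ≤ max (t - 1) 0 + 3 := by linarith [le_max_left (t - 1) 0]
  have hlog : 0 < Real.log (t + 2) := Real.log_pos (by linarith)
  obtain ⟨k, rfl⟩ := Nat.exists_eq_succ_of_ne_zero hd
  calc t ^ k * logWeight (k + 1) (t - 1)
      ≤ (t + 2) ^ k * ((t + 2) ^ (k + 1) * Real.log (t + 2) ^ 2)⁻¹ := by
        unfold logWeight
        gcongr
        linarith
    _ = (t + 2)⁻¹ / Real.log (t + 2) ^ 2 := by
        rw [pow_succ]
        field_simp

lemma integrable_logWeight_norm_sub_one {E : Type*} [NormedAddCommGroup E] [NormedSpace ℝ E]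
    [Nontrivial E] [FiniteDimensional ℝ E] [MeasurableSpace E] [BorelSpace E] (μ : Measure E)
    [μ.IsAddHaarMeasure] :
    Integrable (fun x : E ↦ logWeight (Module.finrank ℝ E) (‖x‖ - 1)) μ := by
  refine (integrable_fun_norm_addHaar μ
    (f := fun t ↦ logWeight (Module.finrank ℝ E) (t - 1))).2 ?_
  have hdom : IntegrableOn (fun t : ℝ ↦ (t + 2)⁻¹ / Real.log (t + 2) ^ 2) (Set.Ioi 0) := by
    have := ((measurePreserving_add_right volume (2 : ℝ)).integrableOn_comp_preimage
      (measurableEmbedding_addRight 2)).2 (integrableOn_inv_div_log_sq_Ioi one_lt_two)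
    simpa [Function.comp_def] using this
  have hmeas : Measurable fun t : ℝ ↦ logWeight (Module.finrank ℝ E) (t - 1) :=
    (antitone_logWeight _).measurable.comp (measurable_id.sub_const 1)
  refine Integrable.mono' hdom
    ((measurable_id.pow_const _).smul hmeas).aestronglyMeasurable
    ((ae_restrict_iff' measurableSet_Ioi).2 (.of_forall fun t (ht : 0 < t) ↦ ?_))
  have hweight := logWeight_nonneg (Module.finrank ℝ E) (t - 1)
  rw [Real.norm_of_nonneg (by positivity), smul_eq_mul]
  exact pow_mul_logWeight_sub_one_le Module.finrank_pos.ne' ht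

lemma tendsto_rpow_div_log_sq_atTop {δ : ℝ} (hδ : 0 < δ) :
    Tendsto (fun r ↦ r ^ δ / Real.log r ^ 2) atTop atTop := by
  have hlim : Tendsto (fun r ↦ Real.log r ^ (2 : ℝ) / r ^ δ) atTop (𝓝[>] 0) := by
    refine tendsto_nhdsWithin_iff.2 ⟨(isLittleO_log_rpow_rpow_atTop 2 hδ).tendsto_div_nhds_zero, ?_⟩
    filter_upwards [eventually_gt_atTop 1] with r hr
    have := Real.log_pos hr
    exact Set.mem_Ioi.2 (by positivity)
  simpa [Pi.inv_def] using hlim.inv_tendsto_nhdsGT_zero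

lemma tendsto_rpow_mul_logWeight_atTop (d : ℕ) {δ : ℝ} (hδ : 0 < δ) :
    Tendsto (fun t ↦ t ^ (d + δ) * logWeight d t) atTop atTop := by
  have hshift := (tendsto_rpow_div_log_sq_atTop hδ).comp
    (tendsto_atTop_add_const_right atTop 3 tendsto_id)
  refine tendsto_atTop_mono' atTop ?_
    (hshift.const_mul_atTop (show 0 < ((2 : ℝ) ^ (d + δ))⁻¹ by positivity))
  filter_upwards [eventually_ge_atTop 3] with t ht
  have ht0 : 0 ≤ t := by linarith
  have hshift_pos : 0 < t + 3 := by linarith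
  calc ((2 : ℝ) ^ (d + δ))⁻¹ * ((t + 3) ^ δ / Real.log (t + 3) ^ 2)
      = ((t + 3) / 2) ^ (d + δ) * ((t + 3) ^ d * Real.log (t + 3) ^ 2)⁻¹ := by
        rw [Real.div_rpow hshift_pos.le two_pos.le, Real.rpow_add hshift_pos, Real.rpow_natCast]
        field_simp
    _ ≤ t ^ (d + δ) * logWeight d t := by
        rw [logWeight, max_eq_left ht0]
        gcongr
        linarith

end LogWeight

open Filter in
theorem statement11_general (N : ℕ) {p : ℝ} (hp : 0 < p) :
    ∃ u : EuclideanSpace ℝ (Fin N) → ℝ, Continuous u ∧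
      ∀ Γ ⊆ sphere 0 1, 0 < μH[(N : ℝ) - 1] Γ → ∀ ρ U, truncatedCone Γ ρ ⊆ U → ∀ s < 1,
        screenedSeminorm N s p U (fun _ ↦ 1) u < ⊤ ∧
        screenedSeminorm N s p U (fun _ ↦ ⊤) u = ⊤ := by
  have hw : Antitone fun t ↦ logWeight N t ^ p⁻¹ := fun a b hab ↦
    Real.rpow_le_rpow (logWeight_nonneg N b) (antitone_logWeight N hab) (inv_nonneg.2 hp.le)
  have hw0 (t : ℝ) : 0 ≤ logWeight N t ^ p⁻¹ := Real.rpow_nonneg (logWeight_nonneg N t) _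
  have hwp (t : ℝ) : (logWeight N t ^ p⁻¹) ^ p = logWeight N t :=
    Real.rpow_inv_rpow (logWeight_nonneg N t) hp.ne'
  refine ⟨_, continuous_radialPrimitive hw, fun Γ hΓ hΓpos ρ U hU s hs ↦ ?_⟩
  obtain ⟨x, hx⟩ := nonempty_of_measure_ne_zero hΓpos.ne'
  have : NeZero N := ⟨by
    rintro rfl
    exact ne_zero_of_mem_unit_sphere ⟨x, hΓ hx⟩ (Subsingleton.elim x 0)⟩
  constructor
  · refine screenedSeminorm_one_radialPrimitive_lt_top hw hw0 hp hs ?_ U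
    simp only [hwp]
    simpa using (integrable_logWeight_norm_sub_one
      (volume : Measure (EuclideanSpace ℝ (Fin N)))).lintegral_lt_top
  · refine screenedSeminorm_top_radialPrimitive_eq_top hw hw0 hp hs ?_
      (volume_preimage_normalize_inter_dyadicAnnulus_one_ne_zero hΓ hΓpos) ?_
    · simpa only [hwp] using tendsto_rpow_mul_logWeight_atTop N (mul_pos hp (sub_pos.2 hs))
    · filter_upwards [eventually_gt_atTop 0, eventually_ge_atTop ρ] with R hR hρR
      simpa using ofReal_pow_mul_le_addHaar_inter_dyadicAnnulus volume hR hρR hU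

/-- Let `1 ≤ p < ∞`, `Γ ⊆ 𝕊^{N-1}` with `𝓗^{N-1}(Γ) > 0`, `ρ ≥ 0`,
and let `K_{Γ,ρ} = {x : ρ < |x|, x/|x| ∈ Γ}`.  If `U ⊆ ℝ^N` is open with
`K_{Γ,ρ} ⊆ U`, then there exists `u ∈ L¹_loc(U)` such that for all `s ∈ (0,1)`,
`|u|_{W̃^{s,p}_{(1)}(U)} < ∞` while `|u|_{Ẇ^{s,p}(U)} = ∞`.  In particular
`Ẇ^{s,p}(U) ⊊ W̃^{s,p}_{(1)}(U)`. -/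
theorem statement11 (N : ℕ) (p : ℝ) (hp : 1 ≤ p)
    (Γ : Set (EuclideanSpace ℝ (Fin N))) (hΓsub : Γ ⊆ Metric.sphere 0 1)
    (hΓpos : 0 < μH[(N : ℝ) - 1] Γ)
    (ρ : ℝ) (hρ : 0 ≤ ρ)
    (U : Set (EuclideanSpace ℝ (Fin N))) (hU : IsOpen U)
    (hKU : {x : EuclideanSpace ℝ (Fin N) | ρ < ‖x‖ ∧ ‖x‖⁻¹ • x ∈ Γ} ⊆ U) :
    ∃ u : EuclideanSpace ℝ (Fin N) → ℝ, LocallyIntegrableOn u U ∧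
      ∀ s : ℝ, 0 < s → s < 1 →
        screenedSeminorm N s p U (fun _ => 1) u < ⊤ ∧
        screenedSeminorm N s p U (fun _ => ⊤) u = ⊤ := by
  obtain ⟨u, hu, h⟩ := statement11_general N (zero_lt_one.trans_le hp)
  exact ⟨u, hu.locallyIntegrable.locallyIntegrableOn U,
    fun s _ hs ↦ h Γ hΓsub hΓpos ρ U hKU s hs⟩
end
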